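/- arXiv:0811.1023 — 6 statements merged into one kernel-verified Lean document; each statement's English description precedes it below -/
import Mathlib

section
/- Let K be an infinite field, R = K[x_1,…,x_r], and let I ⊆ R be an Artinian monomial ideal. Then R/I has the WLP if and only if x_1 + x_2 + ⋯ + x_r is a Lefschetz element for R/I. -/
open MvPolynomial

noncomputable def component (r : ℕ) (K : Type*) [Field K]
    (I : Ideal (MvPolynomial (Fin r) K)) (d : ℕ) :
    Submodule K (MvPolynomial (Fin r) K ⧸ I) :=
  (MvPolynomial.homogeneousSubmodule (Fin r) K d).map
    (Ideal.Quotient.mkₐ K I).toLinearMap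

noncomputable def hilb (r : ℕ) (K : Type*) [Field K]
    (I : Ideal (MvPolynomial (Fin r) K)) (d : ℕ) : ℕ :=
  Module.finrank K (component r K I d)

/-- Injectivity of the multiplication map `×L : (R/I)_d → (R/I)_{d+1}`. -/
def mulMapInj (r : ℕ) (K : Type*) [Field K]
    (I : Ideal (MvPolynomial (Fin r) K)) (L : MvPolynomial (Fin r) K) (d : ℕ) : Prop :=
  ∀ a ∈ component r K I d, Ideal.Quotient.mk I L * a = 0 → a = 0

/-- Surjectivity of the multiplication map `×L : (R/I)_d → (R/I)_{d+1}`. -/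
def mulMapSurj (r : ℕ) (K : Type*) [Field K]
    (I : Ideal (MvPolynomial (Fin r) K)) (L : MvPolynomial (Fin r) K) (d : ℕ) : Prop :=
  ∀ b ∈ component r K I (d + 1), ∃ a ∈ component r K I d, Ideal.Quotient.mk I L * a = b

/-- `L` is a Lefschetz element: a linear form for which every multiplication map
`×L : (R/I)_d → (R/I)_{d+1}` has maximal rank (is injective or surjective). -/
def isLefschetzElem (r : ℕ) (K : Type*) [Field K]
    (I : Ideal (MvPolynomial (Fin r) K)) (L : MvPolynomial (Fin r) K) : Prop :=
  L ∈ MvPolynomial.homogeneousSubmodule (Fin r) K 1 ∧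
    ∀ d : ℕ, mulMapInj r K I L d ∨ mulMapSurj r K I L d

/-- The Weak Lefschetz Property. -/
def hasWLP (r : ℕ) (K : Type*) [Field K] (I : Ideal (MvPolynomial (Fin r) K)) : Prop :=
  ∃ L, isLefschetzElem r K I L

/-!
Let `w` give weight `1` to the variables occurring in a Lefschetz element `L` and weight `0` to the
others. A monomial ideal is homogeneous for this grading, and `L` is the top weight part of `L + M`
for every linear form `M` in the missing variables. The induced map `×(L + M)` is then triangular
with respect to the weight, with `×L` on the diagonal, so it inherits injectivity and surjectivity
from `×L`. Hence some linear form in which every variable occurs is a Lefschetz element, and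
rescaling the variables, which fixes every monomial ideal, turns it into `x₁ + ⋯ + xᵣ`.
-/

section GradedRing

variable {R A : Type*} [CommRing R] [CommRing A] [Algebra R A] (𝒜 : ℕ → Submodule R A)
  [GradedAlgebra 𝒜] {I : Ideal A} {U W : Submodule R A} {L M : A} {m n : ℕ}

open DirectSum

lemma mem_of_add_mul_mem (hI : I.IsHomogeneous 𝒜) (hU : SetLike.IsHomogeneous 𝒜 U)
    (hmn : m < n) (hL : L ∈ 𝒜 n) (hM : M ∈ 𝒜 m) (hinj : ∀ p ∈ U, L * p ∈ I → p ∈ I)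
    {p : A} (hp : p ∈ U) (hLMp : (L + M) * p ∈ I) : p ∈ I := by
  refine (Ideal.IsHomogeneous.mem_iff 𝒜 hI).2 fun k ↦ ?_
  induction k using Nat.strong_decreasing_induction with
  | base =>
    classical
    obtain ⟨N, hN⟩ := (decompose 𝒜 p).support.exists_nat_subset_range
    refine ⟨N, fun k hk ↦ ?_⟩
    have hzero : decompose 𝒜 p k = 0 := by
      by_contra hne
      have := Finset.mem_range.1 (hN (DFinsupp.mem_support_iff.2 hne))
      omega
    simp [hzero]
  | step k hk =>
    have hcomponent : (decompose 𝒜 ((L + M) * p) (n + k) : A) =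
        L * decompose 𝒜 p k + M * decompose 𝒜 p (n + k - m) := by
      rw [add_mul, decompose_add, DirectSum.add_apply, Submodule.coe_add,
        coe_decompose_mul_add_of_left_mem 𝒜 hL, coe_decompose_mul_of_left_mem_of_le 𝒜 hM (by omega)]
    have hlower : M * decompose 𝒜 p (n + k - m) ∈ I := I.mul_mem_left M (hk _ (by omega))
    refine hinj _ (hU k hp) ((I.add_mem_iff_left hlower).1 ?_)
    exact hcomponent ▸ hI (n + k) hLMp

lemma exists_add_mul_sub_mem_of_mem_grading (hI : I.IsHomogeneous 𝒜)
    (hU : SetLike.IsHomogeneous 𝒜 U) (hmn : m < n) (hL : L ∈ 𝒜 n) (hM : M ∈ 𝒜 m)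
    (hMU : ∀ p ∈ U, M * p ∈ W) (hsurj : ∀ q ∈ W, ∃ p ∈ U, L * p - q ∈ I)
    {k : ℕ} {q : A} (hqW : q ∈ W) (hqk : q ∈ 𝒜 k) : ∃ p ∈ U, (L + M) * p - q ∈ I := by
  induction k using Nat.strong_induction_on generalizing q with
  | h k ih =>
    obtain ⟨p, hp, hpq⟩ := hsurj q hqW
    have hcomponent : (decompose 𝒜 (L * p) k : A) - q ∈ I := by
      simpa [decompose_sub, decompose_of_mem_same 𝒜 hqk] using hI k hpq
    by_cases hnk : n ≤ k
    · obtain ⟨j, rfl⟩ := Nat.exists_eq_add_of_le hnk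
      rw [coe_decompose_mul_add_of_left_mem 𝒜 hL] at hcomponent
      set pj : A := ↑(decompose 𝒜 p j)
      have hpj : pj ∈ U := hU j hp
      have hMpj : M * pj ∈ 𝒜 (m + j) := SetLike.mul_mem_graded hM (SetLike.coe_mem _)
      obtain ⟨p', hp', hMp'⟩ := ih (m + j) (by omega) (hMU pj hpj) hMpj
      refine ⟨pj - p', U.sub_mem hpj hp', ?_⟩
      have hsub : (L + M) * (pj - p') - q = (L * pj - q) - ((L + M) * p' - M * pj) := by ring
      exact hsub ▸ I.sub_mem hcomponent hMp'
    · rw [coe_decompose_mul_of_left_mem_of_not_le 𝒜 hL hnk] at hcomponent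
      exact ⟨0, U.zero_mem, by simpa using hcomponent⟩

lemma exists_add_mul_sub_mem (hI : I.IsHomogeneous 𝒜) (hU : SetLike.IsHomogeneous 𝒜 U)
    (hW : SetLike.IsHomogeneous 𝒜 W) (hmn : m < n) (hL : L ∈ 𝒜 n) (hM : M ∈ 𝒜 m)
    (hMU : ∀ p ∈ U, M * p ∈ W) (hsurj : ∀ q ∈ W, ∃ p ∈ U, L * p - q ∈ I)
    {q : A} (hq : q ∈ W) : ∃ p ∈ U, (L + M) * p - q ∈ I := by
  classical
  choose p hpU hpq using fun k ↦ exists_add_mul_sub_mem_of_mem_grading 𝒜 hI hU hmn hL hM hMU hsurj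
    (hW k hq) (decompose 𝒜 q k).2
  refine ⟨∑ k ∈ (decompose 𝒜 q).support, p k, U.sum_mem fun k _ ↦ hpU k, ?_⟩
  have hsum : (L + M) * ∑ k ∈ (decompose 𝒜 q).support, p k - q =
      ∑ k ∈ (decompose 𝒜 q).support, ((L + M) * p k - decompose 𝒜 q k) := by
    rw [Finset.sum_sub_distrib, sum_support_decompose, Finset.mul_sum]
  exact hsum ▸ I.sum_mem fun k _ ↦ hpq k

end GradedRing

section Weights

variable {σ R N : Type*} [CommSemiring R] [AddCommMonoid N]

lemma isWeightedHomogeneous_sum_smul_X [Fintype σ] {w : σ → N} {n : N} {a : σ → R}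
    (h : ∀ i, a i ≠ 0 → w i = n) :
    IsWeightedHomogeneous w (∑ i, a i • X i : MvPolynomial σ R) n := by
  refine IsWeightedHomogeneous.sum _ _ _ fun i _ ↦ ?_
  by_cases hi : a i = 0
  · rw [hi, zero_smul]
    exact isWeightedHomogeneous_zero R w n
  · rw [smul_eq_C_mul, ← h i hi]
    exact (isWeightedHomogeneous_X R w i).C_mul (a i)

variable [DecidableEq N]

attribute [local instance] weightedGradedAlgebra

lemma isHomogeneous_span_monomial (w : σ → N) (S : Set (σ →₀ ℕ)) :
    (Ideal.span ((fun m ↦ monomial m (1 : R)) '' S)).IsHomogeneous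
      (weightedHomogeneousSubmodule R w) := by
  refine Ideal.homogeneous_span _ _ ?_
  rintro _ ⟨m, -, rfl⟩
  exact ⟨_, isWeightedHomogeneous_monomial w m 1 rfl⟩

lemma isHomogeneous_homogeneousSubmodule (w : σ → N) (d : ℕ) :
    DirectSum.SetLike.IsHomogeneous (weightedHomogeneousSubmodule R w)
      (homogeneousSubmodule σ R d) := by
  intro n p hp m hm
  have hcomponent : (DirectSum.decompose (weightedHomogeneousSubmodule R w) p n :
      MvPolynomial σ R) = weightedHomogeneousComponent w n p :=
    weightedDecomposition.decompose'_apply R w p n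
  rw [hcomponent, coeff_weightedHomogeneousComponent] at hm
  exact hp (ite_ne_right_iff.1 hm).2

end Weights

section Scaling

variable {σ R : Type*} [CommSemiring R]

/-- The automorphism of the polynomial ring rescaling each variable `X i` by the unit `c i`: the
action of the torus on polynomials. -/
noncomputable def scaleVars (c : σ → Rˣ) : MvPolynomial σ R ≃ₐ[R] MvPolynomial σ R :=
  AlgEquiv.ofAlgHom (aeval fun i ↦ c i • X i) (aeval fun i ↦ (c i)⁻¹ • X i)
    (by ext i : 1; simp [Units.smul_def, smul_smul])
    (by ext i : 1; simp [Units.smul_def, smul_smul])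

lemma scaleVars_X (c : σ → Rˣ) (i : σ) : scaleVars c (X i) = c i • X i :=
  aeval_X _ i

lemma scaleVars_monomial (c : σ → Rˣ) (m : σ →₀ ℕ) (a : R) :
    scaleVars c (monomial m a) = monomial m ((m.prod fun i k ↦ c i ^ k) • a) := by
  have hprod : (m.prod fun i k ↦ (c i • X i : MvPolynomial σ R) ^ k) =
      (m.prod fun i k ↦ c i ^ k) • m.prod fun i k ↦ X i ^ k := by
    simp only [Finsupp.prod, smul_pow, Finset.prod_smul]
  have haeval : scaleVars c (monomial m a) = C a * m.prod fun i k ↦ (c i • X i) ^ k :=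
    aeval_monomial _ m a
  rw [haeval, hprod, mul_smul_comm, ← monomial_eq, Units.smul_def, smul_monomial, Units.smul_def]

lemma coeff_scaleVars (c : σ → Rˣ) (p : MvPolynomial σ R) (m : σ →₀ ℕ) :
    coeff m (scaleVars c p) = (m.prod fun i k ↦ c i ^ k) • coeff m p := by
  classical
  induction p using MvPolynomial.induction_on' with
  | monomial n a =>
    rw [scaleVars_monomial, coeff_monomial, coeff_monomial, smul_ite, smul_zero]
    split_ifs with h
    · rw [h]
    · rfl
  | add p q hp hq => rw [map_add, coeff_add, coeff_add, smul_add, hp, hq]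

lemma support_scaleVars (c : σ → Rˣ) (p : MvPolynomial σ R) :
    (scaleVars c p).support = p.support := by
  ext m
  rw [mem_support_iff, mem_support_iff, coeff_scaleVars, Ne, smul_eq_zero_iff_eq]

lemma scaleVars_mem_span_monomial_iff (c : σ → Rˣ) {S : Set (σ →₀ ℕ)} {p : MvPolynomial σ R} :
    scaleVars c p ∈ Ideal.span ((fun m ↦ monomial m (1 : R)) '' S) ↔
      p ∈ Ideal.span ((fun m ↦ monomial m (1 : R)) '' S) := by
  rw [mem_ideal_span_monomial_image, mem_ideal_span_monomial_image, support_scaleVars]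

lemma isHomogeneous_scaleVars_iff (c : σ → Rˣ) {p : MvPolynomial σ R} {d : ℕ} :
    (scaleVars c p).IsHomogeneous d ↔ p.IsHomogeneous d := by
  simp only [IsHomogeneous, IsWeightedHomogeneous, ← mem_support_iff, support_scaleVars]

end Scaling

section Lefschetz

variable {r : ℕ} {K : Type*} [Field K] {I : Ideal (MvPolynomial (Fin r) K)}
  {L M : MvPolynomial (Fin r) K}

lemma mulMapInj_iff {d : ℕ} :
    mulMapInj r K I L d ↔ ∀ p : MvPolynomial (Fin r) K, p.IsHomogeneous d → L * p ∈ I → p ∈ I := by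
  simp [mulMapInj, component, ← map_mul, Ideal.Quotient.eq_zero_iff_mem]

lemma mulMapSurj_iff {d : ℕ} :
    mulMapSurj r K I L d ↔ ∀ q : MvPolynomial (Fin r) K, q.IsHomogeneous (d + 1) →
      ∃ p : MvPolynomial (Fin r) K, p.IsHomogeneous d ∧ L * p - q ∈ I := by
  simp [mulMapSurj, component, ← map_mul, Ideal.Quotient.mk_eq_mk_iff_sub_mem]

lemma mulMapInj_map_iff (φ : MvPolynomial (Fin r) K ≃ₐ[K] MvPolynomial (Fin r) K)
    (hI : ∀ p, φ p ∈ I ↔ p ∈ I) {d : ℕ} (hφ : ∀ p, (φ p).IsHomogeneous d ↔ p.IsHomogeneous d) :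
    mulMapInj r K I (φ L) d ↔ mulMapInj r K I L d := by
  rw [mulMapInj_iff, mulMapInj_iff, φ.surjective.forall]
  simp only [← map_mul, hI, hφ]

lemma mulMapSurj_map_iff (φ : MvPolynomial (Fin r) K ≃ₐ[K] MvPolynomial (Fin r) K)
    (hI : ∀ p, φ p ∈ I ↔ p ∈ I) (hφ : ∀ d p, (φ p).IsHomogeneous d ↔ p.IsHomogeneous d) {d : ℕ} :
    mulMapSurj r K I (φ L) d ↔ mulMapSurj r K I L d := by
  rw [mulMapSurj_iff, mulMapSurj_iff, φ.surjective.forall]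
  refine forall_congr' fun q ↦ ?_
  rw [φ.surjective.exists]
  simp only [← map_mul, ← map_sub, hI, hφ]

lemma isLefschetzElem_map_iff (φ : MvPolynomial (Fin r) K ≃ₐ[K] MvPolynomial (Fin r) K)
    (hI : ∀ p, φ p ∈ I ↔ p ∈ I) (hφ : ∀ d p, (φ p).IsHomogeneous d ↔ p.IsHomogeneous d) :
    isLefschetzElem r K I (φ L) ↔ isLefschetzElem r K I L :=
  and_congr (hφ 1 L) (forall_congr' fun d ↦
    or_congr (mulMapInj_map_iff φ hI (hφ d)) (mulMapSurj_map_iff φ hI hφ))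

attribute [local instance] weightedGradedAlgebra

lemma isLefschetzElem_add {w : Fin r → ℕ} {m n : ℕ}
    (hI : I.IsHomogeneous (weightedHomogeneousSubmodule K w)) (hmn : m < n)
    (hLw : IsWeightedHomogeneous w L n) (hMw : IsWeightedHomogeneous w M m)
    (hM : M.IsHomogeneous 1) (hL : isLefschetzElem r K I L) : isLefschetzElem r K I (L + M) := by
  obtain ⟨hL1, hmax⟩ := hL
  have hU := isHomogeneous_homogeneousSubmodule (R := K) w
  refine ⟨IsHomogeneous.add hL1 hM, fun d ↦ (hmax d).imp (fun hinj ↦ ?_) fun hsurj ↦ ?_⟩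
  · rw [mulMapInj_iff] at hinj ⊢
    exact fun p ↦ mem_of_add_mul_mem _ hI (hU d) hmn hLw hMw hinj
  · rw [mulMapSurj_iff] at hsurj ⊢
    exact fun q ↦ exists_add_mul_sub_mem _ hI (hU d) (hU (d + 1)) hmn hLw hMw
      (fun p hp ↦ add_comm 1 d ▸ hM.mul hp) hsurj

lemma isLefschetzElem_sum_smul_X_of_eq {S : Set (Fin r →₀ ℕ)} {a b : Fin r → K}
    (hab : ∀ i, a i ≠ 0 → b i = a i)
    (ha : isLefschetzElem r K (Ideal.span ((fun m ↦ monomial m (1 : K)) '' S)) (∑ i, a i • X i)) :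
    isLefschetzElem r K (Ideal.span ((fun m ↦ monomial m (1 : K)) '' S)) (∑ i, b i • X i) := by
  classical
  let w : Fin r → ℕ := fun i ↦ if a i = 0 then 0 else 1
  have hLw : IsWeightedHomogeneous w (∑ i, a i • X i) 1 :=
    isWeightedHomogeneous_sum_smul_X fun i hi ↦ if_neg hi
  have hMw : IsWeightedHomogeneous w (∑ i, (b i - a i) • X i) 0 :=
    isWeightedHomogeneous_sum_smul_X fun i hi ↦
      if_pos (by_contra fun hai ↦ hi (sub_eq_zero.2 (hab i hai)))
  have hM : (∑ i, (b i - a i) • X i : MvPolynomial (Fin r) K).IsHomogeneous 1 :=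
    isWeightedHomogeneous_sum_smul_X fun _ _ ↦ rfl
  have hadd : (∑ i, b i • X i : MvPolynomial (Fin r) K) =
      ∑ i, a i • X i + ∑ i, (b i - a i) • X i := by
    simp only [← Finset.sum_add_distrib, ← add_smul, add_sub_cancel]
  rw [hadd]
  exact isLefschetzElem_add (isHomogeneous_span_monomial w S) zero_lt_one hLw hMw hM ha

lemma isLefschetzElem_sum_units_smul_X_iff {S : Set (Fin r →₀ ℕ)} (c : Fin r → Kˣ) :
    isLefschetzElem r K (Ideal.span ((fun m ↦ monomial m (1 : K)) '' S)) (∑ i, c i • X i) ↔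
      isLefschetzElem r K (Ideal.span ((fun m ↦ monomial m (1 : K)) '' S)) (∑ i, X i) := by
  have hscale : ∑ i, c i • X i = scaleVars c (∑ i, X i) := by
    simp only [map_sum, scaleVars_X]
  rw [hscale]
  exact isLefschetzElem_map_iff (scaleVars c) (fun _ ↦ scaleVars_mem_span_monomial_iff c)
    fun _ _ ↦ isHomogeneous_scaleVars_iff c

end Lefschetz

theorem stmt_2_general {r : ℕ} {K : Type*} [Field K] (I : Ideal (MvPolynomial (Fin r) K))
    (hmon : ∃ S : Set (Fin r →₀ ℕ), I = Ideal.span ((fun m ↦ monomial m (1 : K)) '' S)) :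
    hasWLP r K I ↔ isLefschetzElem r K I (∑ i : Fin r, X i) := by
  classical
  obtain ⟨S, rfl⟩ := hmon
  refine ⟨?_, fun h ↦ ⟨_, h⟩⟩
  rintro ⟨L, hL⟩
  obtain ⟨a, rfl⟩ : ∃ a : Fin r → K, ∑ i, a i • X i = L := by
    rw [← Submodule.mem_span_range_iff_exists_fun, ← homogeneousSubmodule_one_eq_span_X]
    exact hL.1
  let c : Fin r → Kˣ := fun i ↦ if h : a i = 0 then 1 else Units.mk0 (a i) h
  have hca : ∀ i, a i ≠ 0 → (c i : K) = a i := fun i hi ↦ by simp [c, hi]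
  exact (isLefschetzElem_sum_units_smul_X_iff c).1 (isLefschetzElem_sum_smul_X_of_eq hca hL)

/-- For an Artinian monomial ideal `I` over an infinite field, `R/I` has the WLP
if and only if `x₁ + ⋯ + xᵣ` is a Lefschetz element for `R/I`. -/
theorem stmt_2 {r : ℕ} {K : Type*} [Field K] [Infinite K]
    (I : Ideal (MvPolynomial (Fin r) K))
    (hmon : ∃ S : Set (Fin r →₀ ℕ),
      I = Ideal.span ((fun m => (MvPolynomial.monomial m (1 : K))) '' S))
    (hart : FiniteDimensional K (MvPolynomial (Fin r) K ⧸ I)) :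
    hasWLP r K I ↔ isLefschetzElem r K I (∑ i : Fin r, X i) :=
  stmt_2_general I hmon
end

section
/- Let J ⊆ I ⊆ R = K[x_1,…,x_r] be homogeneous ideals with codim J = codim I − 1, and let ℓ ∈ R be a linear form such that J : ℓ = J. Set I′ = ℓ·I + J (a basic double link of I). Then for each integer j, dim_K (R/I′)_j = dim_K (R/I)_{j−1} + dim_K (R/J)_j − dim_K (R/J)_{j−1}. -/
open MvPolynomial

/-- The codimension (height) of an ideal: the infimum of the heights of the primes
containing it. -/
noncomputable def idealCodim {R : Type*} [CommRing R] (I : Ideal R) : ℕ∞ :=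
  ⨅ P : {P : PrimeSpectrum R // I ≤ P.asIdeal}, Order.height P.val

/-!
Multiplication by `ℓ`, of degree `e`, is injective on `R/J`, and the image of `I` in `R/J` is sent
onto the image of `I' = ℓI + J`. Hence `(I/J)_j ≅ (I'/J)_{e+j}`, and comparing the exact sequences
`0 → (I/J)_j → (R/J)_j → (R/I)_j → 0` and
`0 → (I'/J)_{e+j} → (R/J)_{e+j} → (R/I')_{e+j} → 0` gives the formula. Arguing with lengths in
`ℕ∞` avoids both subtraction and finiteness assumptions.
-/

theorem length_eq_length_inf_ker_add_length_map {R M N : Type*} [Ring R]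
    [AddCommGroup M] [AddCommGroup N] [Module R M] [Module R N]
    (f : M →ₗ[R] N) (P : Submodule R M) :
    Module.length R P =
      Module.length R (P ⊓ LinearMap.ker f : Submodule R M) + Module.length R (P.map f) := by
  refine Module.length_eq_add_of_exact (Submodule.inclusion inf_le_left) (f.submoduleMap P)
    (Submodule.inclusion_injective _) (f.submoduleMap_surjective P) fun x ↦ ?_
  rw [← LinearMap.coe_range, Submodule.range_inclusion]
  simp [Subtype.ext_iff]

section GradedAlgebra

variable {ι K A : Type*} [CommRing K] [CommRing A] [Algebra K A] (𝒜 : ι → Submodule K A)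

/-- The degree-`d` part of `A ⧸ I`, encoded as the image of `𝒜 d`. It is defined for every ideal
`I`, homogeneous or not. -/
def quotientComponent (I : Ideal A) (d : ι) : Submodule K (A ⧸ I) :=
  (𝒜 d).map (Ideal.Quotient.mkₐ K I).toLinearMap

/-- The degree-`d` part of `I/J`, encoded as the elements of degree `d` in `A ⧸ J` that lie in the
image of `I`. -/
def subquotientComponent (J I : Ideal A) (d : ι) : Submodule K (A ⧸ J) :=
  quotientComponent 𝒜 J d ⊓ (I.map (Ideal.Quotient.mk J)).restrictScalars K

/-- The basic double link `ℓI + J` of `I` along `J`, formed for arbitrary `ℓ`, `I` and `J`. -/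
abbrev basicDoubleLink (ℓ : A) (I J : Ideal A) : Ideal A :=
  Ideal.span {ℓ} * I ⊔ J

theorem le_basicDoubleLink (ℓ : A) (I J : Ideal A) : J ≤ basicDoubleLink ℓ I J :=
  le_sup_right

theorem map_mk_basicDoubleLink (ℓ : A) (I J : Ideal A) :
    (basicDoubleLink ℓ I J).map (Ideal.Quotient.mk J) =
      Ideal.span {Ideal.Quotient.mk J ℓ} * I.map (Ideal.Quotient.mk J) := by
  rw [basicDoubleLink, Ideal.map_sup, Ideal.map_mul, Ideal.map_span, Set.image_singleton,
    Ideal.map_quotient_self, sup_bot_eq]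

theorem mulLeft_mk_injective {J : Ideal A} {ℓ : A} (hcolon : ∀ x, ℓ * x ∈ J → x ∈ J) :
    Function.Injective (LinearMap.mulLeft K (Ideal.Quotient.mk J ℓ)) := by
  refine (injective_iff_map_eq_zero _).mpr fun y hy ↦ ?_
  obtain ⟨x, rfl⟩ := Ideal.Quotient.mk_surjective y
  rw [LinearMap.mulLeft_apply, ← map_mul, Ideal.Quotient.eq_zero_iff_mem] at hy
  exact Ideal.Quotient.eq_zero_iff_mem.mpr (hcolon x hy)

theorem length_quotientComponent_eq_add {J I : Ideal A} (hJI : J ≤ I) (d : ι) :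
    Module.length K (quotientComponent 𝒜 J d) =
      Module.length K (subquotientComponent 𝒜 J I d) +
        Module.length K (quotientComponent 𝒜 I d) := by
  let π : A ⧸ J →ₗ[K] A ⧸ I := (Ideal.Quotient.factorₐ K hJI).toLinearMap
  have hker : LinearMap.ker π = (I.map (Ideal.Quotient.mk J)).restrictScalars K :=
    SetLike.ext fun x ↦ SetLike.ext_iff.mp (Ideal.Quotient.factor_ker hJI) x
  have hmap : (quotientComponent 𝒜 J d).map π = quotientComponent 𝒜 I d :=
    (Submodule.map_comp _ _ _).symm
  rw [length_eq_length_inf_ker_add_length_map π, hker, hmap, subquotientComponent]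

theorem mul_mem_quotientComponent [Add ι] [SetLike.GradedMul 𝒜] {J : Ideal A} {ℓ : A} {e j : ι}
    (hℓ : ℓ ∈ 𝒜 e) {y : A ⧸ J} (hy : y ∈ quotientComponent 𝒜 J j) :
    Ideal.Quotient.mk J ℓ * y ∈ quotientComponent 𝒜 J (e + j) := by
  obtain ⟨x, hx, rfl⟩ := hy
  exact ⟨ℓ * x, SetLike.mul_mem_graded hℓ hx, map_mul (Ideal.Quotient.mk J) ℓ x⟩

variable [DecidableEq ι] [AddLeftCancelMonoid ι] [GradedAlgebra 𝒜]
  {J : Ideal A} {ℓ : A} {e : ι}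

theorem mem_quotientComponent_of_mul_mem (hJ : J.IsHomogeneous 𝒜) (hℓ : ℓ ∈ 𝒜 e)
    (hcolon : ∀ x, ℓ * x ∈ J → x ∈ J) {j : ι} {y : A ⧸ J}
    (hy : Ideal.Quotient.mk J ℓ * y ∈ quotientComponent 𝒜 J (e + j)) :
    y ∈ quotientComponent 𝒜 J j := by
  obtain ⟨x, rfl⟩ := Ideal.Quotient.mk_surjective y
  obtain ⟨p, hp, hpx : Ideal.Quotient.mk J p = Ideal.Quotient.mk J (ℓ * x)⟩ := hy
  -- If `ℓx ≡ p` mod `J` with `p` of degree `e + j`, comparing components gives `ℓ(x_j - x) ∈ J`.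
  let xj : A := DirectSum.decompose 𝒜 x j
  have hdiff : p - ℓ * x ∈ J := Ideal.Quotient.eq.mp hpx
  have hcomponent : p - ℓ * xj ∈ J := by
    have h := hJ (e + j) hdiff
    rwa [DirectSum.decompose_sub, DirectSum.sub_apply, AddSubgroupClass.coe_sub,
      DirectSum.decompose_of_mem_same 𝒜 hp,
      DirectSum.coe_decompose_mul_add_of_left_mem 𝒜 hℓ] at h
  have hxj : xj - x ∈ J := hcolon _ <| by
    convert J.sub_mem hdiff hcomponent using 1
    ring
  exact ⟨xj, SetLike.coe_mem _, Ideal.Quotient.eq.mpr hxj⟩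

theorem map_mulLeft_subquotientComponent (hJ : J.IsHomogeneous 𝒜) (hℓ : ℓ ∈ 𝒜 e)
    (hcolon : ∀ x, ℓ * x ∈ J → x ∈ J) (I : Ideal A) (j : ι) :
    (subquotientComponent 𝒜 J I j).map (LinearMap.mulLeft K (Ideal.Quotient.mk J ℓ)) =
      subquotientComponent 𝒜 J (basicDoubleLink ℓ I J) (e + j) := by
  ext z
  rw [subquotientComponent, subquotientComponent, map_mk_basicDoubleLink]
  constructor
  · rintro ⟨y, ⟨hy, hyI⟩, rfl⟩
    exact ⟨mul_mem_quotientComponent 𝒜 hℓ hy,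
      Ideal.mul_mem_mul (Ideal.mem_span_singleton_self _) hyI⟩
  · rintro ⟨hz, hzI⟩
    obtain ⟨y, hyI, rfl⟩ := Ideal.mem_span_singleton_mul.mp hzI
    exact ⟨y, ⟨mem_quotientComponent_of_mul_mem 𝒜 hJ hℓ hcolon hz, hyI⟩, rfl⟩

theorem length_subquotientComponent_basicDoubleLink (hJ : J.IsHomogeneous 𝒜) (hℓ : ℓ ∈ 𝒜 e)
    (hcolon : ∀ x, ℓ * x ∈ J → x ∈ J) (I : Ideal A) (j : ι) :
    Module.length K (subquotientComponent 𝒜 J (basicDoubleLink ℓ I J) (e + j)) =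
      Module.length K (subquotientComponent 𝒜 J I j) := by
  rw [← map_mulLeft_subquotientComponent 𝒜 hJ hℓ hcolon I j]
  exact (Submodule.equivMapOfInjective _ (mulLeft_mk_injective hcolon) _).length_eq.symm

theorem stmt_4_general {I : Ideal A} (hJI : J ≤ I) (hJ : J.IsHomogeneous 𝒜) (hℓ : ℓ ∈ 𝒜 e)
    (hcolon : ∀ x, ℓ * x ∈ J → x ∈ J) (j : ι) :
    Module.length K (quotientComponent 𝒜 (basicDoubleLink ℓ I J) (e + j)) +
        Module.length K (quotientComponent 𝒜 J j) =
      Module.length K (quotientComponent 𝒜 I j) +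
        Module.length K (quotientComponent 𝒜 J (e + j)) := by
  rw [length_quotientComponent_eq_add 𝒜 hJI j,
    length_quotientComponent_eq_add 𝒜 (le_basicDoubleLink ℓ I J) (e + j),
    length_subquotientComponent_basicDoubleLink 𝒜 hJ hℓ hcolon I j]
  ring

end GradedAlgebra

theorem length_quotientComponent_eq_hilb {r : ℕ} {K : Type*} [Field K]
    (I : Ideal (MvPolynomial (Fin r) K)) (d : ℕ) :
    Module.length K (quotientComponent (homogeneousSubmodule (Fin r) K) I d) = hilb r K I d := by
  have : Module.Finite K (homogeneousSubmodule (Fin r) K d) :=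
    Module.Finite.iff_fg.mpr (homogeneousSubmodule_fg _ _ d)
  have : Module.Finite K (quotientComponent (homogeneousSubmodule (Fin r) K) I d) :=
    Module.Finite.map _ _
  exact Module.length_eq_finrank K _

theorem isHomogeneous_of_homogeneousComponent_mem {σ R : Type*} [CommSemiring R]
    {I : Ideal (MvPolynomial σ R)} (hI : ∀ p ∈ I, ∀ n : ℕ, homogeneousComponent n p ∈ I) :
    letI := gradedAlgebra (σ := σ) (R := R)
    I.IsHomogeneous (homogeneousSubmodule σ R) := by
  intro n p hp
  exact (decomposition.decompose'_apply p n).symm ▸ hI p hp n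

/-- Hilbert function of a basic double link `I' = ℓ·I + J`:
`dim (R/I')_j = dim (R/I)_{j-1} + dim (R/J)_j - dim (R/J)_{j-1}`
(stated additively to avoid truncated subtraction). -/
theorem stmt_4 {r : ℕ} {K : Type*} [Field K]
    (J I : Ideal (MvPolynomial (Fin r) K)) (hJI : J ≤ I)
    (hhomI : ∀ p ∈ I, ∀ n : ℕ, MvPolynomial.homogeneousComponent n p ∈ I)
    (hhomJ : ∀ p ∈ J, ∀ n : ℕ, MvPolynomial.homogeneousComponent n p ∈ J)
    (hcodim : idealCodim J + 1 = idealCodim I)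
    (ℓ : MvPolynomial (Fin r) K) (hℓ : ℓ ∈ MvPolynomial.homogeneousSubmodule (Fin r) K 1)
    (hcolon : ∀ x : MvPolynomial (Fin r) K, ℓ * x ∈ J → x ∈ J) :
    ∀ j : ℕ,
      hilb r K (Ideal.span {ℓ} * I ⊔ J) (j + 1) + hilb r K J j =
        hilb r K I j + hilb r K J (j + 1) := by
  intro j
  let _ := gradedAlgebra (σ := Fin r) (R := K)
  simpa only [length_quotientComponent_eq_hilb, add_comm 1 j, ← Nat.cast_add, Nat.cast_inj] using
    stmt_4_general _ hJI (isHomogeneous_of_homogeneousComponent_mem hhomJ) hℓ hcolon j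
end

section
/- Let K be a field, s ≥ 2, R = K[x_1,…,x_s], I_s = (x_1^s,…,x_s^s), and J_s = (x_1^{s+1}, x_2^{s+1}, x_3^s,…,x_s^s). Then h_{R/I_s}(binom(s,2)) − h_{R/I_s}(binom(s,2) − 1) ≤ h_{R/J_s}(binom(s,2) + 1) − h_{R/J_s}(binom(s,2) + 2). -/
open MvPolynomial

/-!
The Hilbert series of `K[x₁, …, x_r] / (x₁^a₁, …, x_r^a_r)` is the product of the `q`-integers
`[n] = 1 + T + ⋯ + T^(n-1)`, `n = a₁, …, a_r`. Multiplying by `[n]` replaces the coefficient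
sequence by its sums over windows of length `n`, which preserves symmetry and unimodality, so every
such product is symmetric and unimodal.
Raising the exponents `a` and `b` of two variables by one changes the series `H_I = [a] [b] P`,
where `P` collects the other variables, into `H_J = [a + 1] [b + 1] P`, and
`[a + 1] [b + 1] = T [a] [b] + [a + b + 1]`. With `Q = [a + b + 1] P` this gives
`(H_J(d+1) - H_J(d+2)) - (H_I(d) - H_I(d-1)) = (H_I(d-1) - H_I(d+1)) + (Q(d+1) - Q(d+2))`,
and beyond the middle degree both brackets are nonnegative by symmetry and unimodality.
-/

/-- A sequence indexed by `ℤ` is symmetric and unimodal about `N / 2`: its value at `i` depends only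
on the distance from `i` to `N / 2`, and decreases with it. The centre is recorded through its
double so that half-integral centres are allowed. -/
def IsSymmUnimodal {M : Type*} [LE M] (f : ℤ → M) (N : ℤ) : Prop :=
  ∀ ⦃i j : ℤ⦄, |2 * i - N| ≤ |2 * j - N| → f j ≤ f i

theorem IsSymmUnimodal.sum_Ioc {M : Type*} [AddCommMonoid M] [PartialOrder M]
    [IsOrderedCancelAddMonoid M] {f : ℤ → M} {N : ℤ} (hf : IsSymmUnimodal f N) (n : ℕ) :
    IsSymmUnimodal (fun i => ∑ x ∈ Finset.Ioc (i - n) i, f x) (N + n - 1) := by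
  intro i j hij
  -- The reflection `x ↦ i + j - n + 1 - x` exchanges the two windows, and moves each point that
  -- lies only in the window ending at `j` closer to `N / 2`.
  rw [← Finset.sum_sdiff_le_sum_sdiff]
  calc ∑ x ∈ Finset.Ioc (j - n) j \ Finset.Ioc (i - n) i, f x
      ≤ ∑ x ∈ Finset.Ioc (j - n) j \ Finset.Ioc (i - n) i, f (i + j - n + 1 - x) := by
        refine Finset.sum_le_sum fun x hx => hf ?_
        simp only [Finset.mem_sdiff, Finset.mem_Ioc] at hx
        grind
    _ = ∑ x ∈ Finset.Ioc (i - n) i \ Finset.Ioc (j - n) j, f x := by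
        refine Finset.sum_nbij' (i + j - n + 1 - ·) (i + j - n + 1 - ·) ?_ ?_ ?_ ?_ ?_ <;>
          simp only [Finset.mem_sdiff, Finset.mem_Ioc] <;> grind

section QNumber

open LaurentPolynomial

/-- The `q`-integer `[n] = 1 + T + ⋯ + T^(n-1)`, the Hilbert series of `K[x] / (x^n)`. It is taken
as a Laurent polynomial so that coefficient sequences are indexed by `ℤ`. -/
noncomputable def qNumber (n : ℕ) : ℕ[T;T⁻¹] := ∑ i ∈ Finset.range n, T 1 ^ i

theorem qNumber_add (m n : ℕ) : qNumber (m + n) = qNumber m + T 1 ^ m * qNumber n := by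
  simp only [qNumber, Finset.sum_range_add, Finset.mul_sum, pow_add]

theorem qNumber_one : qNumber 1 = 1 := by
  simp only [qNumber, Finset.sum_range_one, pow_zero]

theorem qNumber_succ_mul_qNumber_succ (a b : ℕ) :
    qNumber (a + 1) * qNumber (b + 1) = T 1 * (qNumber a * qNumber b) + qNumber (a + b + 1) := by
  have expand_left : qNumber (a + 1) = 1 + T 1 * qNumber a := by
    rw [add_comm, qNumber_add, qNumber_one, pow_one]
  have expand_right : qNumber (b + 1) = qNumber b + T 1 ^ b := by
    rw [qNumber_add, qNumber_one, mul_one]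
  have split_sum : qNumber (a + b + 1) = qNumber b + T 1 ^ b * qNumber (a + 1) := by
    rw [← qNumber_add, add_comm a b, add_assoc]
  rw [split_sum, expand_left, expand_right]
  ring

theorem coeff_mul_qNumber (p : ℕ[T;T⁻¹]) (n : ℕ) (i : ℤ) :
    (p * qNumber n).coeff i = ∑ x ∈ Finset.Ioc (i - n) i, p.coeff x := by
  have coeff_shift (j : ℕ) : (p * T 1 ^ j).coeff i = p.coeff (i - j) := by
    rw [T_pow, T, AddMonoidAlgebra.coeff_mul_single_apply, mul_one, mul_one, sub_eq_add_neg]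
  simp only [qNumber, Finset.mul_sum, AddMonoidAlgebra.coeff_sum, Finset.sum_apply', coeff_shift]
  refine Finset.sum_nbij' (fun j : ℕ => i - j) (fun x => (i - x).toNat) ?_ ?_ ?_ ?_ ?_ <;>
    simp only [Finset.mem_range, Finset.mem_Ioc] <;> grind

theorem IsSymmUnimodal.mul_qNumber {p : ℕ[T;T⁻¹]} {N : ℤ} (hp : IsSymmUnimodal p.coeff N)
    (n : ℕ) : IsSymmUnimodal (p * qNumber n).coeff (N + n - 1) := by
  simpa only [← coeff_mul_qNumber] using hp.sum_Ioc n

theorem isSymmUnimodal_coeff_one : IsSymmUnimodal (1 : ℕ[T;T⁻¹]).coeff 0 := by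
  intro i j hij
  simp only [← T_zero, T_apply]
  grind

theorem isSymmUnimodal_coeff_prod_qNumber {ι : Type*} (s : Finset ι) (a : ι → ℕ) :
    IsSymmUnimodal (∏ k ∈ s, qNumber (a k)).coeff (∑ k ∈ s, ((a k : ℤ) - 1)) := by
  classical
  induction s using Finset.induction_on with
  | empty => simpa only [Finset.prod_empty, Finset.sum_empty] using isSymmUnimodal_coeff_one
  | insert k s hk ih =>
    rw [Finset.prod_insert hk, Finset.sum_insert hk, mul_comm, add_comm, ← add_sub_assoc]
    exact ih.mul_qNumber (a k)

theorem coeff_prod_qNumber {ι : Type*} [Fintype ι] (a : ι → ℕ) (d : ℕ) :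
    (∏ k, qNumber (a k)).coeff d = Nat.card {e : ι →₀ ℕ // e.degree = d ∧ ∀ k, e k < a k} := by
  classical
  simp only [qNumber, Finset.prod_univ_sum, Finset.prod_pow_eq_pow_sum]
  simp only [T_pow, AddMonoidAlgebra.coeff_sum, Finset.sum_apply', T_apply, mul_one, Nat.cast_inj,
    Finset.sum_boole, Nat.cast_id]
  rw [← Nat.card_eq_finsetCard]
  refine Nat.card_congr (Finsupp.equivFunOnFinite.subtypeEquiv fun e => ?_).symm
  simp [Finsupp.degree_eq_sum, and_comm]

end QNumber

section VarPowIdeal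

variable {σ : Type*}

theorem isUpperSet_exists_le_apply (a : σ → ℕ) : IsUpperSet {e : σ →₀ ℕ | ∃ k, a k ≤ e k} :=
  fun _ _ hef ⟨k, hk⟩ => ⟨k, hk.trans (hef k)⟩

/-- The monomial complete intersection `(x₁^a₁, …, x_r^a_r)`. -/
noncomputable def varPowIdeal (R : Type*) [CommSemiring R] (a : σ → ℕ) :
    Ideal (MvPolynomial σ R) :=
  Ideal.span {p | ∃ k, p = X k ^ a k}

theorem varPowIdeal_eq_restrictSupportIdeal {R : Type*} [CommSemiring R] (a : σ → ℕ) :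
    varPowIdeal R a = restrictSupportIdeal R _ (isUpperSet_exists_le_apply a) := by
  have generators_eq : {p : MvPolynomial σ R | ∃ k, p = X k ^ a k} =
      (monomial · 1) '' Set.range fun k => Finsupp.single k (a k) := by
    ext p
    simp [X_pow_eq_monomial, eq_comm]
  ext p
  rw [varPowIdeal, generators_eq, mem_ideal_span_monomial_image]
  simp only [Set.exists_range_iff, Finsupp.single_le_iff]
  exact (mem_restrictSupport_iff R).symm

end VarPowIdeal

section Hilbert

variable {K : Type*} [Field K] {r : ℕ}

theorem component_restrictSupportIdeal {U : Set (Fin r →₀ ℕ)} (hU : IsUpperSet U) (d : ℕ) :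
    component r K (restrictSupportIdeal K U hU) d =
      (restrictSupport K {e | e.degree = d ∧ e ∉ U}).map
        (Ideal.Quotient.mkₐ K (restrictSupportIdeal K U hU)).toLinearMap := by
  have homogeneous_eq : homogeneousSubmodule (Fin r) K d = restrictSupport K {e | e.degree = d} :=
    homogeneousSubmodule_eq_finsupp_supported _ _ _
  rw [component, homogeneous_eq]
  refine le_antisymm ?_ (Submodule.map_mono (restrictSupport_mono K fun _ he => he.1))
  rw [restrictSupport_eq_span, Submodule.map_span, Submodule.span_le]
  rintro _ ⟨_, ⟨e, he, rfl⟩, rfl⟩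
  by_cases heU : e ∈ U
  · have monomial_mem : monomial e (1 : K) ∈ restrictSupportIdeal K U hU :=
      (monomial_mem_restrictSupport K).2 (.inl heU)
    have image_eq_zero := Ideal.Quotient.eq_zero_iff_mem.2 monomial_mem
    exact image_eq_zero ▸ zero_mem _
  · exact Submodule.mem_map_of_mem ((monomial_mem_restrictSupport K).2 (.inl ⟨he, heU⟩))

theorem hilb_restrictSupportIdeal {U : Set (Fin r →₀ ℕ)} (hU : IsUpperSet U) (d : ℕ) :
    hilb r K (restrictSupportIdeal K U hU) d =
      Nat.card {e : Fin r →₀ ℕ // e.degree = d ∧ e ∉ U} := by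
  set S : Set (Fin r →₀ ℕ) := {e | e.degree = d ∧ e ∉ U}
  set π := (Ideal.Quotient.mkₐ K (restrictSupportIdeal K U hU)).toLinearMap
  have π_injective : Function.Injective (π.domRestrict (restrictSupport K S)) := by
    rw [injective_iff_map_eq_zero]
    rintro ⟨p, hpS⟩ hp
    have hpU : p ∈ restrictSupport K U := Ideal.Quotient.eq_zero_iff_mem.1 hp
    rw [Subtype.ext_iff, Submodule.coe_zero, ← support_eq_empty, Finset.eq_empty_iff_forall_notMem]
    exact fun e he => (hpS he).2 (hpU he)
  rw [hilb, component_restrictSupportIdeal, ← LinearMap.range_domRestrict,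
    LinearMap.finrank_range_of_inj π_injective,
    Module.finrank_eq_nat_card_basis (basisRestrictSupport K S)]
  rfl

theorem hilb_varPowIdeal (a : Fin r → ℕ) (d : ℕ) :
    hilb r K (varPowIdeal K a) d = (∏ k, qNumber (a k)).coeff d := by
  simp only [varPowIdeal_eq_restrictSupportIdeal, hilb_restrictSupportIdeal, coeff_prod_qNumber,
    Set.mem_ofPred_eq, not_exists, not_le]

theorem hilb_varPowIdeal_raise_pair (a : Fin r → ℕ) {i j : Fin r} (hij : i ≠ j) (d : ℕ) :
    hilb r K (varPowIdeal K fun k => if k = i ∨ k = j then a k + 1 else a k) (d + 1) =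
      hilb r K (varPowIdeal K a) d +
        ((∏ k ∈ {i, j}ᶜ, qNumber (a k)) * qNumber (a i + a j + 1)).coeff (d + 1) := by
  set P := ∏ k ∈ {i, j}ᶜ, qNumber (a k)
  have prod_eq : ∏ k, qNumber (a k) = qNumber (a i) * qNumber (a j) * P := by
    rw [← Finset.prod_mul_prod_compl {i, j}, Finset.prod_pair hij]
  have prod_raised_eq : ∏ k, qNumber (if k = i ∨ k = j then a k + 1 else a k) =
      qNumber (a i + 1) * qNumber (a j + 1) * P := by
    rw [← Finset.prod_mul_prod_compl {i, j}, Finset.prod_pair hij]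
    congr 1
    · simp
    · refine Finset.prod_congr rfl fun k hk => ?_
      rw [if_neg (by simpa using hk)]
  have recurrence : qNumber (a i + 1) * qNumber (a j + 1) * P =
      (∏ k, qNumber (a k)) * LaurentPolynomial.T 1 + P * qNumber (a i + a j + 1) := by
    rw [prod_eq, qNumber_succ_mul_qNumber_succ]
    ring
  rw [hilb_varPowIdeal, hilb_varPowIdeal, prod_raised_eq, recurrence]
  simp [LaurentPolynomial.T, -LaurentPolynomial.single_eq_C_mul_T]

end Hilbert

theorem two_mul_choose_two_add_self (n : ℕ) : 2 * n.choose 2 + n = n * n := by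
  rw [Nat.choose_two_right, Nat.mul_div_cancel' n.even_mul_pred_self.two_dvd, Nat.mul_sub_one,
    Nat.sub_add_cancel n.le_mul_self]

theorem stmt_8_general {K : Type*} [Field K] {r : ℕ} (a : Fin r → ℕ) {i j : Fin r} (hij : i ≠ j)
    {d : ℕ} (hd : 0 < d) (had : ∑ k, a k ≤ 2 * d + r) :
    letI I : Ideal (MvPolynomial (Fin r) K) := varPowIdeal K a
    letI J : Ideal (MvPolynomial (Fin r) K) :=
      varPowIdeal K fun k => if k = i ∨ k = j then a k + 1 else a k
    hilb r K I d + hilb r K J (d + 2) ≤ hilb r K I (d - 1) + hilb r K J (d + 1) := by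
  have sum_le : ∑ k, ((a k : ℤ) - 1) ≤ 2 * d := by
    rw [Finset.sum_sub_distrib, ← Nat.cast_sum, Finset.sum_const, Finset.card_fin, nsmul_one]
    omega
  have sum_eq : ∑ k, ((a k : ℤ) - 1) = ∑ k ∈ {i, j}ᶜ, ((a k : ℤ) - 1) + (a i + a j) - 2 := by
    rw [← Finset.sum_add_sum_compl {i, j}, Finset.sum_pair hij]
    ring
  have hilb_I_le : hilb r K (varPowIdeal K a) (d + 1) ≤ hilb r K (varPowIdeal K a) (d - 1) := by
    rw [hilb_varPowIdeal, hilb_varPowIdeal]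
    apply isSymmUnimodal_coeff_prod_qNumber
    grind
  have remainder_le := (isSymmUnimodal_coeff_prod_qNumber {i, j}ᶜ a).mul_qNumber (a i + a j + 1)
    (i := d + 1) (j := (d + 1 : ℕ) + 1) (by push_cast; grind)
  rw [hilb_varPowIdeal_raise_pair a hij (d + 1), hilb_varPowIdeal_raise_pair a hij d]
  omega

/-- With `I_s = (x₁^s, …, x_s^s)` and `J_s = (x₁^{s+1}, x₂^{s+1}, x₃^s, …, x_s^s)`,
`h_{R/I_s}(C(s,2)) - h_{R/I_s}(C(s,2)-1) ≤ h_{R/J_s}(C(s,2)+1) - h_{R/J_s}(C(s,2)+2)`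
(stated additively to avoid truncated subtraction). -/
theorem stmt_8 {K : Type*} [Field K] (s : ℕ) (hs : 2 ≤ s) :
    letI Is : Ideal (MvPolynomial (Fin s) K) := Ideal.span {p | ∃ i : Fin s, p = X i ^ s}
    letI Js : Ideal (MvPolynomial (Fin s) K) :=
      Ideal.span {p | ∃ i : Fin s, p = X i ^ (if (i : ℕ) < 2 then s + 1 else s)}
    letI m := Nat.choose s 2
    hilb s K Is m + hilb s K Js (m + 2) ≤ hilb s K Is (m - 1) + hilb s K Js (m + 1) := by
  have lt_two_iff (k : Fin s) : (k : ℕ) < 2 ↔ k = ⟨0, by omega⟩ ∨ k = ⟨1, by omega⟩ := by grind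
  simp only [lt_two_iff]
  exact stmt_8_general (fun _ => s) (by simp) (Nat.choose_pos hs)
    (by simp [two_mul_choose_two_add_self])
end

section
/- Let K be any field, r ≥ 3, R = K[x_1,…,x_r], and I_{r,r} = (x_1^r,…,x_r^r, x_1 x_2 ⋯ x_r). Then the level Artinian algebra R/I_{r,r} fails to have the WLP; more precisely, h_{R/I_{r,r}}(binom(r,2) − 1) ≥ h_{R/I_{r,r}}(binom(r,2)), yet for every linear form L the multiplication map ×L : (R/I_{r,r})_{binom(r,2)−1} → (R/I_{r,r})_{binom(r,2)} is not surjective. -/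
open MvPolynomial

/-!
The standard monomials of degree `d` are counted by choosing the `n < r` variables that occur and
a composition of `d` into `n` parts less than `r`, so that
`h(d) = ∑ n < r, C(r, n) * N n d` with `N n d = [t ^ d] (t + ⋯ + t ^ (r - 1)) ^ n`. The sequence
`N n` is symmetric and unimodal about `n * r / 2`, and from `C(r, 2) - 1` to `C(r, 2)` only the
term `n = r - 1` can increase. It increases exactly as much as `N (r - 2)` decreases, and the latter
has the larger coefficient `C(r, 2) ≥ r = C(r, r - 1)`.

Surjectivity fails because for `L = ∑ i, c i • X i` there is a linear functional that kills the
ideal and all multiples of `L` but not all forms of degree `C(r, 2)`. If no `c i` vanishes, it is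
the pairing with the Vandermonde determinant in the variables `Y i / c i`: every monomial of that
determinant has the exponents `0, …, r - 1` in some order, and `L` contracts it to zero since
replacing one row `i` of a matrix `A` by row `i` of `A * N` and summing over `i` gives
`tr N * det A`, with `N` a nilpotent shift. In general the Vandermonde determinant is formed from
the variables with `c i ≠ 0` only and multiplied by a monomial in the others, which carries the
remaining, higher exponents.
-/

section CenteredUnimodal

/-- `f` is symmetric about `c / 2` and nonincreasing in the distance to `c / 2`. The center is
doubled so that it can be a half-integer, and the single inequality contains the symmetry. -/
def IsCenteredUnimodal {α : Type*} [LE α] (f : ℤ → α) (c : ℤ) : Prop :=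
  ∀ ⦃d e : ℤ⦄, |2 * d - c| ≤ |2 * e - c| → f e ≤ f d

theorem IsCenteredUnimodal.apply_sub {α : Type*} [PartialOrder α] {f : ℤ → α} {c : ℤ}
    (hf : IsCenteredUnimodal f c) (d : ℤ) : f (c - d) = f d := by
  have h : |2 * (c - d) - c| = |2 * d - c| := by rw [abs_sub_comm]; ring_nf
  exact (hf h.ge).antisymm (hf h.le)

theorem isCenteredUnimodal_of_apply_sub_of_succ_le {α : Type*} [Preorder α] {f : ℤ → α} {c : ℤ}
    (hsymm : ∀ d, f (c - d) = f d) (hstep : ∀ d, c ≤ 2 * d → f (d + 1) ≤ f d) :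
    IsCenteredUnimodal f c := by
  have antitone_right {d e : ℤ} (hd : c ≤ 2 * d) (hde : d ≤ e) : f e ≤ f d := by
    induction e, hde using Int.leInduction with
    | base => exact le_rfl
    | succ e hde ih => exact (hstep e (by omega)).trans ih
  have exists_right (d : ℤ) : ∃ d', 2 * d' - c = |2 * d - c| ∧ f d' = f d := by
    rcases le_total c (2 * d) with h | h
    · exact ⟨d, (abs_of_nonneg (by omega)).symm, rfl⟩
    · exact ⟨c - d, by rw [abs_of_nonpos (by omega)]; ring, hsymm d⟩
  intro d e hde
  obtain ⟨d', hd', hfd⟩ := exists_right d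
  obtain ⟨e', he', hfe⟩ := exists_right e
  have := abs_nonneg (2 * d - c)
  rw [← hfd, ← hfe]
  exact antitone_right (by omega) (by omega)

theorem sum_Ico_sub_succ {α : Type*} [AddCommMonoid α] (f : ℤ → α) {a b : ℕ} (hab : a ≤ b)
    (d : ℤ) : ∑ j ∈ Finset.Ico a b, f (d + 1 - j) + f (d + 1 - b) =
      ∑ j ∈ Finset.Ico a b, f (d - j) + f (d + 1 - a) := by
  induction b, hab using Nat.le_induction with
  | base => simp
  | succ b hab ih =>
    rw [Finset.sum_Ico_succ_top hab, Finset.sum_Ico_succ_top hab, ih, Nat.cast_succ,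
      add_sub_add_right_eq_sub]
    exact add_right_comm _ _ _

theorem IsCenteredUnimodal.sum_Ico_sub {α : Type*} [AddCommGroup α] [PartialOrder α]
    [IsOrderedAddMonoid α] {f : ℤ → α} {c : ℤ} (hf : IsCenteredUnimodal f c) {a b : ℕ}
    (hab : a ≤ b) :
    IsCenteredUnimodal (fun d ↦ ∑ j ∈ Finset.Ico a b, f (d - j)) (c + a + b - 1) := by
  refine isCenteredUnimodal_of_apply_sub_of_succ_le (fun d ↦ ?_) (fun d hd ↦ ?_)
  · refine Finset.sum_nbij' (fun j ↦ a + b - 1 - j) (fun j ↦ a + b - 1 - j) ?_ ?_ ?_ ?_ ?_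
    any_goals intro j hj; rw [Finset.mem_Ico] at *; omega
    intro j hj
    rw [Finset.mem_Ico] at hj
    rw [← hf.apply_sub]
    congr 1
    omega
  · have hends : f (d + 1 - a) ≤ f (d + 1 - b) := hf <| abs_le_abs (by omega) (by omega)
    have := sum_Ico_sub_succ f hab d
    refine le_of_add_le_add_right (this.le.trans ?_)
    gcongr

end CenteredUnimodal

section Counting

open LaurentPolynomial Finset

/-- The generating function `t + t² + ⋯ + t ^ (k - 1)` of one part; its `n`-th power counts
compositions into `n` parts less than `k`. Laurent polynomials allow coefficients in negative
degrees, so that reflections and shifts of degrees need no case distinctions. -/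
noncomputable def partGenFun (k : ℕ) : ℤ[T;T⁻¹] :=
  ∑ j ∈ Finset.Ico 1 k, T (j : ℤ)

theorem coeff_mul_T (q : ℤ[T;T⁻¹]) (j d : ℤ) : (q * T j).coeff d = q.coeff (d - j) := by
  rw [T, AddMonoidAlgebra.coeff_mul_single_apply, mul_one, sub_eq_add_neg]

theorem coeff_mul_partGenFun (q : ℤ[T;T⁻¹]) (k : ℕ) (d : ℤ) :
    (q * partGenFun k).coeff d = ∑ j ∈ Finset.Ico 1 k, q.coeff (d - j) := by
  simp only [partGenFun, Finset.mul_sum, AddMonoidAlgebra.coeff_sum, Finsupp.finsetSum_apply,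
    coeff_mul_T]

theorem isCenteredUnimodal_coeff_partGenFun_pow {k : ℕ} (hk : 1 ≤ k) (n : ℕ) :
    IsCenteredUnimodal (partGenFun k ^ n).coeff (n * k) := by
  induction n with
  | zero =>
    intro d e hde
    have eq_zero_of_eq_zero : e = 0 → d = 0 := by
      rintro rfl
      simpa [-abs_mul] using hde
    rw [pow_zero, ← T_zero, T_apply, T_apply]
    split_ifs <;> omega
  | succ n ih =>
    have center_succ : ((n + 1 : ℕ) * k : ℤ) = n * k + (1 : ℕ) + k - 1 := by push_cast; ring
    rw [center_succ]
    simpa only [← coeff_mul_partGenFun, ← pow_succ] using ih.sum_Ico_sub hk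

theorem coeff_partGenFun_pow_succ_sub {k : ℕ} (hk : 1 ≤ k) (n : ℕ) (d : ℤ) :
    (partGenFun k ^ (n + 1)).coeff (d + 1) - (partGenFun k ^ (n + 1)).coeff d =
      (partGenFun k ^ n).coeff d - (partGenFun k ^ n).coeff (d + 1 - k) := by
  have h := sum_Ico_sub_succ (partGenFun k ^ n).coeff hk d
  rw [← coeff_mul_partGenFun, ← coeff_mul_partGenFun, ← pow_succ, Nat.cast_one,
    add_sub_cancel_right] at h
  linarith

theorem coeff_one_add_partGenFun_pow_sub (k r : ℕ) (d : ℤ) :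
    ((1 + partGenFun k) ^ r - partGenFun k ^ r).coeff d =
      ∑ n ∈ Finset.range r, (r.choose n : ℤ) * (partGenFun k ^ n).coeff d := by
  rw [add_comm, add_pow, Finset.sum_range_succ]
  simp only [one_pow, mul_one, Nat.choose_self, Nat.cast_one, add_sub_cancel_right,
    AddMonoidAlgebra.coeff_sum, Finsupp.finsetSum_apply]
  refine Finset.sum_congr rfl fun n _ ↦ ?_
  rw [← nsmul_eq_mul', AddMonoidAlgebra.coeff_smul, Finsupp.smul_apply, nsmul_eq_mul]

theorem coeff_choose_two_le {r : ℕ} (hr : 3 ≤ r) :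
    ((1 + partGenFun r) ^ r - partGenFun r ^ r).coeff (r.choose 2) ≤
      ((1 + partGenFun r) ^ r - partGenFun r ^ r).coeff (r.choose 2 - 1) := by
  obtain ⟨s, rfl⟩ : ∃ s, r = s + 2 := ⟨r - 2, by omega⟩
  set m : ℕ := (s + 2).choose 2 with hm
  set N : ℕ → ℤ → ℤ := fun n ↦ (partGenFun (s + 2) ^ n).coeff
  have two_mul_m : 2 * (m : ℤ) = (s + 2) * (s + 1) := by
    have := Nat.add_one_mul_choose_eq (s + 1) 1
    rw [Nat.choose_one_right] at this
    zify at this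
    linarith
  have unimodal (n : ℕ) : IsCenteredUnimodal (N n) (n * (s + 2 : ℕ)) :=
    isCenteredUnimodal_coeff_partGenFun_pow (by omega) n
  have descent {n : ℕ} (hn : n ≤ s) : N n m ≤ N n (m - 1) := by
    have center_le : (n * (s + 2 : ℕ) : ℤ) ≤ 2 * m - (s + 2) := by
      have : (n : ℤ) ≤ s := by exact_mod_cast hn
      push_cast
      nlinarith
    exact unimodal n (abs_le_abs (by omega) (by omega))
  -- The ascent for `s + 1` parts equals the descent for `s` parts, which occurs `m ≥ s + 2` times.
  have ascent_eq_descent : N (s + 1) m - N (s + 1) (m - 1) = N s (m - 1) - N s m := by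
    have h := coeff_partGenFun_pow_succ_sub (k := s + 2) (by omega) s (m - 1)
    have hrefl : (m : ℤ) - (s + 2 : ℕ) = s * (s + 2 : ℕ) - m := by push_cast; linarith
    rw [sub_add_cancel, hrefl] at h
    exact h.trans (congrArg _ ((unimodal s).apply_sub m))
  have lower_le : ∑ n ∈ Finset.range s, ((s + 2).choose n : ℤ) * N n m ≤
      ∑ n ∈ Finset.range s, ((s + 2).choose n : ℤ) * N n (m - 1) := by
    gcongr with n hn
    exact descent (Finset.mem_range.1 hn).le
  have choose_s : (s + 2).choose s = m := by rw [hm, ← Nat.choose_symm_add]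
  have le_m : (s + 2 : ℤ) ≤ m := by nlinarith
  rw [coeff_one_add_partGenFun_pow_sub, coeff_one_add_partGenFun_pow_sub]
  simp only [Finset.sum_range_succ _ (s + 1), Finset.sum_range_succ _ s, choose_s,
    Nat.choose_succ_self_right, Nat.cast_succ]
  nlinarith [descent le_rfl]

theorem prod_T {ι : Type*} (s : Finset ι) (f : ι → ℤ) :
    ∏ i ∈ s, (T (f i) : ℤ[T;T⁻¹]) = T (∑ i ∈ s, f i) := by
  classical
  induction s using Finset.induction_on with
  | empty => simp
  | insert i s hi ih => rw [Finset.prod_insert hi, Finset.sum_insert hi, ih, T_add]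

theorem coeff_sum_T_pow_card {σ : Type*} [Fintype σ] (s : Finset ℕ) (d : ℕ) :
    ((∑ j ∈ s, T (j : ℤ) : ℤ[T;T⁻¹]) ^ Fintype.card σ).coeff d =
      ({b : σ →₀ ℕ | b.degree = d ∧ ∀ i, b i ∈ s}.ncard : ℤ) := by
  classical
  have expand : (∑ j ∈ s, T (j : ℤ) : ℤ[T;T⁻¹]) ^ Fintype.card σ =
      ∑ b ∈ Fintype.piFinset fun _ : σ ↦ s, T (∑ i, (b i : ℤ)) := by
    simp only [← Finset.card_univ, ← Finset.prod_const, Finset.prod_univ_sum, prod_T]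
  have ncard_eq : {b : σ →₀ ℕ | b.degree = d ∧ ∀ i, b i ∈ s}.ncard =
      #{b ∈ Fintype.piFinset fun _ : σ ↦ s | ∑ i, b i = d} := by
    rw [← Set.ncard_coe_finset]
    refine Set.ncard_congr' (Finsupp.equivFunOnFinite.subtypeEquiv fun b ↦ ?_)
    simp [Finsupp.degree_eq_sum, and_comm]
  rw [expand, ncard_eq, Finset.card_filter, AddMonoidAlgebra.coeff_sum, Finsupp.finsetSum_apply]
  push_cast
  refine Finset.sum_congr rfl fun b _ ↦ ?_
  rw [T_apply]
  norm_cast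

end Counting

section MonomialIdeal

/-- The exponents of the monomials in the ideal generated by `X i ^ k` for all `i` and by
`∏ i, X i`. -/
def powersProductExponents (σ : Type*) (k : ℕ) : Set (σ →₀ ℕ) :=
  {b | (∃ i, k ≤ b i) ∨ ∀ i, b i ≠ 0}

theorem isUpperSet_powersProductExponents (σ : Type*) (k : ℕ) :
    IsUpperSet (powersProductExponents σ k) := by
  rintro b b' hbb' (⟨i, hi⟩ | hb)
  · exact Or.inl ⟨i, hi.trans (hbb' i)⟩
  · exact Or.inr fun i ↦ ((Nat.pos_of_ne_zero (hb i)).trans_le (hbb' i)).ne'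

theorem span_pow_union_prod_eq_restrictSupportIdeal (R σ : Type*) [CommSemiring R] [Fintype σ]
    (k : ℕ) :
    Ideal.span ({p : MvPolynomial σ R | ∃ i, p = X i ^ k} ∪ {∏ i, X i}) =
      restrictSupportIdeal R _ (isUpperSet_powersProductExponents σ k) := by
  have generators_eq : {p : MvPolynomial σ R | ∃ i, p = X i ^ k} ∪ {∏ i, X i} =
      (fun b ↦ monomial b 1) ''
        (Set.range (fun i ↦ Finsupp.single i k) ∪ {∑ i, Finsupp.single i 1}) := by
    rw [Set.image_union, ← Set.range_comp, Set.image_singleton, monomial_sum_one]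
    simp only [Function.comp_def, ← X_pow_eq_monomial, pow_one, Set.range, eq_comm]
  have exists_le_iff (b : σ →₀ ℕ) :
      (∃ g ∈ Set.range (fun i ↦ Finsupp.single i k) ∪ {∑ i, Finsupp.single i 1}, g ≤ b) ↔
        b ∈ powersProductExponents σ k := by
    have sum_le_iff : ∑ i, Finsupp.single i 1 ≤ b ↔ ∀ i, b i ≠ 0 := by
      classical
      simp only [Finsupp.le_def, Finsupp.finsetSum_apply, Finsupp.single_apply,
        Finset.sum_ite_eq', Finset.mem_univ, if_true, Nat.one_le_iff_ne_zero]
    simp only [Set.mem_union, Set.mem_singleton_iff, or_and_right, exists_or, Set.exists_range_iff,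
      exists_eq_left, sum_le_iff, Finsupp.single_le_iff]
    rfl
  ext p
  rw [generators_eq, mem_ideal_span_monomial_image]
  exact forall₂_congr fun b _ ↦ exists_le_iff b

open LaurentPolynomial in
theorem ncard_degree_sdiff_powersProductExponents (σ : Type*) [Fintype σ] {k : ℕ} (hk : 1 ≤ k)
    (d : ℕ) :
    (({b : σ →₀ ℕ | b.degree = d} \ powersProductExponents σ k).ncard : ℤ) =
      ((1 + partGenFun k) ^ Fintype.card σ - partGenFun k ^ Fintype.card σ).coeff d := by
  let bounded := {b : σ →₀ ℕ | b.degree = d ∧ ∀ i, b i ∈ Finset.range k}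
  let positive := {b : σ →₀ ℕ | b.degree = d ∧ ∀ i, b i ∈ Finset.Ico 1 k}
  have sdiff_eq : {b : σ →₀ ℕ | b.degree = d} \ powersProductExponents σ k =
      bounded \ positive := by
    ext b
    simp only [powersProductExponents, ne_eq, Set.mem_sdiff, Set.mem_ofPred_eq, not_or, not_exists,
      not_le, not_forall, Decidable.not_not, Finset.mem_range, Finset.mem_Ico, bounded, positive]
    grind
  have finite : bounded.Finite := (Finsupp.finite_of_degree_eq d).subset fun b hb ↦ hb.1
  have subset : positive ⊆ bounded := fun b hb ↦ ⟨hb.1, fun i ↦ by grind [hb.2 i]⟩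
  have one_add : 1 + partGenFun k = ∑ j ∈ Finset.range k, T (j : ℤ) := by
    rw [partGenFun, Finset.sum_range_eq_add_Ico _ hk, Nat.cast_zero, T_zero]
  have ncard_add : ((bounded \ positive).ncard + positive.ncard : ℤ) = bounded.ncard :=
    mod_cast Set.ncard_sdiff_add_ncard_of_subset subset finite
  rw [sdiff_eq, eq_sub_of_add_eq ncard_add,
    AddMonoidAlgebra.coeff_sub, Finsupp.sub_apply, one_add, partGenFun, coeff_sum_T_pow_card,
    coeff_sum_T_pow_card]

theorem map_mkₐ_restrictSupport {R σ : Type*} [CommRing R] {s : Set (σ →₀ ℕ)} (hs : IsUpperSet s)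
    (t : Set (σ →₀ ℕ)) :
    (restrictSupport R t).map (Ideal.Quotient.mkₐ R (restrictSupportIdeal R s hs)).toLinearMap =
      (restrictSupport R (t \ s)).map
        (Ideal.Quotient.mkₐ R (restrictSupportIdeal R s hs)).toLinearMap := by
  refine le_antisymm ?_ (Submodule.map_mono (restrictSupport_mono R Set.sdiff_subset))
  rw [restrictSupport_eq_span R t, Submodule.map_span_le]
  rintro _ ⟨b, hb, rfl⟩
  by_cases hbs : b ∈ s
  · have mem_ideal : monomial b (1 : R) ∈ restrictSupportIdeal R s hs :=
      (monomial_mem_restrictSupport R).2 (Or.inl hbs)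
    have : Ideal.Quotient.mk (restrictSupportIdeal R s hs) (monomial b 1) = 0 :=
      Ideal.Quotient.eq_zero_iff_mem.2 mem_ideal
    exact this ▸ zero_mem _
  · exact Submodule.mem_map_of_mem ((monomial_mem_restrictSupport R).2 (Or.inl ⟨hb, hbs⟩))

theorem disjoint_restrictSupport_ker_mkₐ {R σ : Type*} [CommRing R] {s t : Set (σ →₀ ℕ)}
    (hs : IsUpperSet s) (hst : Disjoint t s) :
    Disjoint (restrictSupport R t)
      (Ideal.Quotient.mkₐ R (restrictSupportIdeal R s hs)).toLinearMap.ker := by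
  rw [Submodule.disjoint_def]
  intro p hpt hp
  have hps : p ∈ restrictSupportIdeal R s hs := Ideal.Quotient.eq_zero_iff_mem.1 hp
  rw [← support_eq_empty, ← Finset.coe_eq_empty]
  exact Set.subset_empty_iff.1 (hst hpt hps)

theorem hilb_restrictSupportIdeal_s9 {r : ℕ} (K : Type*) [Field K] {s : Set (Fin r →₀ ℕ)}
    (hs : IsUpperSet s) (d : ℕ) :
    hilb r K (restrictSupportIdeal K s hs) d = ({b | b.degree = d} \ s).ncard := by
  have component_eq : component r K (restrictSupportIdeal K s hs) d =
      (restrictSupport K ({b | b.degree = d} \ s)).map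
        (Ideal.Quotient.mkₐ K (restrictSupportIdeal K s hs)).toLinearMap := by
    rw [component, homogeneousSubmodule_eq_finsupp_supported]
    exact map_mkₐ_restrictSupport hs _
  have mkₐ_injective := LinearMap.injective_domRestrict_iff.2 <|
    disjoint_restrictSupport_ker_mkₐ (R := K) (t := {b | b.degree = d} \ s) hs
      Set.disjoint_sdiff_left
  rw [hilb, component_eq, ← LinearMap.range_domRestrict,
    LinearMap.finrank_range_of_inj mkₐ_injective,
    Module.finrank_eq_nat_card_basis (basisRestrictSupport K _), Nat.card_coe_set_eq]

end MonomialIdeal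

section DeterminantFunctional

open Matrix in
theorem sum_det_updateRow_vecMul {ι R : Type*} [Fintype ι] [DecidableEq ι] [CommRing R]
    (A N : Matrix ι ι R) :
    ∑ i, (A.updateRow i (A i ᵥ* N)).det = N.trace * A.det := by
  calc ∑ i, (A.updateRow i (A i ᵥ* N)).det
    _ = ∑ i, ∑ j, A.adjugate j i * (A * N) i j := by
      refine Finset.sum_congr rfl fun i _ ↦ ?_
      rw [← cramer_transpose_apply, cramer_eq_adjugate_mulVec, ← adjugate_transpose]
      rfl
    _ = (A.adjugate * (A * N)).trace := Finset.sum_comm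
    _ = N.trace * A.det := by
      rw [← Matrix.mul_assoc, adjugate_mul, smul_mul_assoc, one_mul, trace_smul, smul_eq_mul,
        mul_comm]

theorem exists_perm_forall_iff_lt {r : ℕ} (p : Fin r → Prop) :
    ∃ (β : Equiv.Perm (Fin r)) (s : ℕ), ∀ i, p i ↔ (β i : ℕ) < s := by
  classical
  have card_eq : Fintype.card {i // p i} =
      Fintype.card {j : Fin r // (j : ℕ) < Fintype.card {i // p i}} := by
    rw [Fintype.card_subtype (fun j : Fin r ↦ (j : ℕ) < _), Fin.card_filter_val_lt, min_eq_right]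
    simpa using Fintype.card_subtype_le p
  let e := Fintype.equivOfCardEq card_eq
  exact ⟨e.extendSubtype, _, fun i ↦
    ⟨e.extendSubtype_mem i, not_imp_not.1 (e.extendSubtype_not_mem i)⟩⟩

variable {K : Type*} [Field K] {r : ℕ}

open scoped Classical in
/-- The row of the determinant in `vandermondeFunctional` contributed by the variable `X i` with
exponent `n`; columns stand for exponents, so only column `n` can be nonzero. The permutation `β`
is meant to satisfy `c i ≠ 0 ↔ β i < s`; a variable with `c i = 0` only admits the exponent
`β i`. -/
noncomputable def vandermondeRow (c : Fin r → K) (β : Equiv.Perm (Fin r)) (s : ℕ) (i : Fin r)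
    (n : ℕ) (j : Fin r) : K :=
  if c i = 0 then if j = β i ∧ j = n then 1 else 0
  else if j < s ∧ j = n then (c i)⁻¹ ^ n else 0

/-- The matrix of the nilpotent shift of the first `s` coordinates of row vectors, by which
multiplication with `X i` acts on row `i`. -/
def truncatedShift (R : Type*) [Zero R] [One R] (r s : ℕ) : Matrix (Fin r) (Fin r) R :=
  .of fun j k ↦ if (k : ℕ) = j + 1 ∧ k < s then 1 else 0

theorem trace_truncatedShift (R : Type*) [Semiring R] (r s : ℕ) :
    (truncatedShift R r s).trace = 0 :=
  Finset.sum_eq_zero fun j _ ↦ if_neg fun h ↦ by omega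

open Matrix in
theorem smul_vandermondeRow_succ {c : Fin r → K} {β : Equiv.Perm (Fin r)} {s : ℕ}
    (hβ : ∀ i, c i ≠ 0 ↔ β i < s) (i : Fin r) (n : ℕ) :
    c i • vandermondeRow c β s i (n + 1) = vandermondeRow c β s i n ᵥ* truncatedShift K r s := by
  ext k
  simp only [Pi.smul_apply, smul_eq_mul, vecMul, dotProduct, truncatedShift, of_apply, mul_ite,
    mul_one, mul_zero]
  by_cases hci : c i = 0
  · have not_lt : ¬ (β i : ℕ) < s := (hβ i).not.1 (not_not.2 hci)
    rw [hci, zero_mul, eq_comm]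
    refine Finset.sum_eq_zero fun j _ ↦ ?_
    simp only [vandermondeRow, hci, if_true]
    split_ifs <;> grind
  · simp only [vandermondeRow, hci, if_false]
    by_cases hk : (k : ℕ) < s ∧ (k : ℕ) = n + 1
    · rw [Finset.sum_eq_single_of_mem ⟨n, by omega⟩ (Finset.mem_univ _) fun j _ hj ↦ by grind,
        if_pos hk, if_pos hk.symm, if_pos ⟨by dsimp only; omega, rfl⟩, pow_succ',
        mul_inv_cancel_left₀ hci]
    · rw [if_neg hk, mul_zero, Finset.sum_eq_zero fun j _ ↦ by grind]

/-- The pairing of polynomials with the product of the Vandermonde determinant in the variables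
`Y i / c i` with `c i ≠ 0`, of which there are `s`, and the monomial `∏ Y i ^ β i` over the
remaining `i`; both factors are combined into one determinant. -/
noncomputable def vandermondeFunctional (c : Fin r → K) (β : Equiv.Perm (Fin r)) (s : ℕ) :
    MvPolynomial (Fin r) K →ₗ[K] K :=
  (basisMonomials (Fin r) K).constr K fun b ↦
    (Matrix.of fun i ↦ vandermondeRow c β s i (b i)).det

theorem vandermondeFunctional_monomial_one (c : Fin r → K) (β : Equiv.Perm (Fin r)) (s : ℕ)
    (b : Fin r →₀ ℕ) :
    vandermondeFunctional c β s (monomial b 1) =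
      (Matrix.of fun i ↦ vandermondeRow c β s i (b i)).det :=
  (basisMonomials (Fin r) K).constr_basis K _ b

open Matrix in
theorem vandermondeFunctional_linear_mul {c : Fin r → K} {β : Equiv.Perm (Fin r)} {s : ℕ}
    (hβ : ∀ i, c i ≠ 0 ↔ β i < s) (p : MvPolynomial (Fin r) K) :
    vandermondeFunctional c β s ((∑ i, c i • X i) * p) = 0 := by
  suffices vandermondeFunctional c β s ∘ₗ LinearMap.mulLeft K (∑ i, c i • X i) = 0 from
    LinearMap.congr_fun this p
  refine (basisMonomials (Fin r) K).ext fun b ↦ ?_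
  let A := Matrix.of fun i ↦ vandermondeRow c β s i (b i)
  have term_eq (i : Fin r) : c i * vandermondeFunctional c β s (X i * monomial b 1) =
      (A.updateRow i (A i ᵥ* truncatedShift K r s)).det := by
    have row_succ : A i ᵥ* truncatedShift K r s = c i • vandermondeRow c β s i (b i + 1) :=
      (smul_vandermondeRow_succ hβ i (b i)).symm
    rw [row_succ, det_updateRow_smul, X, monomial_mul, one_mul, vandermondeFunctional_monomial_one]
    congr 2
    ext i' j
    obtain rfl | hi := eq_or_ne i' i
    · simp [add_comm]
    · simp [A, hi]
  calc vandermondeFunctional c β s ((∑ i, c i • X i) * monomial b 1)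
    _ = ∑ i, c i * vandermondeFunctional c β s (X i * monomial b 1) := by
      simp only [Finset.sum_mul, map_sum, smul_mul_assoc, map_smul, smul_eq_mul]
    _ = (truncatedShift K r s).trace * A.det := by
      simp only [term_eq, sum_det_updateRow_vecMul]
    _ = 0 := by rw [trace_truncatedShift, zero_mul]

theorem vandermondeFunctional_eq_zero_of_mem_restrictSupportIdeal {c : Fin r → K}
    {β : Equiv.Perm (Fin r)} {s : ℕ} (hr : 0 < r) {p : MvPolynomial (Fin r) K}
    (hp : p ∈ restrictSupportIdeal K _ (isUpperSet_powersProductExponents (Fin r) r)) :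
    vandermondeFunctional c β s p = 0 := by
  have hp' : p ∈ restrictSupport K (powersProductExponents (Fin r) r) := hp
  suffices restrictSupport K (powersProductExponents (Fin r) r) ≤
      (vandermondeFunctional c β s).ker from this hp'
  rw [restrictSupport_eq_span, Submodule.span_le]
  rintro _ ⟨b, hb, rfl⟩
  rw [SetLike.mem_coe, LinearMap.mem_ker, vandermondeFunctional_monomial_one]
  rcases hb with ⟨i, hi⟩ | hb
  · refine Matrix.det_eq_zero_of_row_eq_zero i fun j ↦ ?_
    have : (j : ℕ) ≠ b i := by omega
    simp [vandermondeRow, this]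
  · refine Matrix.det_eq_zero_of_column_eq_zero ⟨0, hr⟩ fun i ↦ ?_
    simp [vandermondeRow, (hb i).symm]

/-- The exponent of `∏ X i ^ β i`, a monomial of degree `C(r, 2)` that occurs in the polynomial
defining `vandermondeFunctional`. -/
noncomputable def permExponent (β : Equiv.Perm (Fin r)) : Fin r →₀ ℕ :=
  Finsupp.equivFunOnFinite.symm fun i ↦ (β i : ℕ)

theorem degree_permExponent (β : Equiv.Perm (Fin r)) :
    (permExponent β).degree = r.choose 2 := by
  simp only [Finsupp.degree_eq_sum, permExponent, Finsupp.equivFunOnFinite_symm_apply_apply]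
  rw [Equiv.sum_comp β (fun i : Fin r ↦ (i : ℕ)), Fin.sum_univ_eq_sum_range (fun i ↦ i) r,
    Finset.sum_range_id, Nat.choose_two_right]

theorem vandermondeFunctional_monomial_permExponent_ne_zero {c : Fin r → K}
    {β : Equiv.Perm (Fin r)} {s : ℕ} (hβ : ∀ i, c i ≠ 0 ↔ β i < s) :
    vandermondeFunctional c β s (monomial (permExponent β) 1) ≠ 0 := by
  classical
  have matrix_eq : (Matrix.of fun i ↦ vandermondeRow c β s i (permExponent β i)) =
      (Matrix.diagonal fun i ↦ if c i = 0 then 1 else (c i)⁻¹ ^ (β i : ℕ)).submatrix id β.symm := by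
    ext i j
    have := hβ i
    simp only [Matrix.of_apply, vandermondeRow, permExponent, Matrix.submatrix_apply, id,
      Finsupp.equivFunOnFinite_symm_apply_apply, Matrix.diagonal_apply, Equiv.eq_symm_apply,
      Fin.val_inj]
    grind
  rw [vandermondeFunctional_monomial_one, matrix_eq, Matrix.det_permute', Matrix.det_diagonal]
  have sign_ne_zero : ((Equiv.Perm.sign β.symm : ℤ) : K) ≠ 0 :=
    ((Equiv.Perm.sign β.symm).isUnit.map (Int.castRingHom K)).ne_zero
  refine mul_ne_zero sign_ne_zero (Finset.prod_ne_zero_iff.2 fun i _ ↦ ?_)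
  split_ifs with hci
  · exact one_ne_zero
  · exact pow_ne_zero _ (inv_ne_zero hci)

end DeterminantFunctional

section Lefschetz

variable {r : ℕ} {K : Type*} [Field K] {I : Ideal (MvPolynomial (Fin r) K)}
  {L : MvPolynomial (Fin r) K} {d : ℕ}

theorem finite_component (I : Ideal (MvPolynomial (Fin r) K)) (d : ℕ) :
    Module.Finite K (component r K I d) :=
  .of_fg <| (homogeneousSubmodule_fg (Fin r) K d).map _

theorem mul_mem_component (hL : L ∈ homogeneousSubmodule (Fin r) K 1)
    {a : MvPolynomial (Fin r) K ⧸ I} (ha : a ∈ component r K I d) :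
    Ideal.Quotient.mk I L * a ∈ component r K I (d + 1) := by
  obtain ⟨p, hp, rfl⟩ := ha
  have hLp : L * p ∈ homogeneousSubmodule (Fin r) K (d + 1) := add_comm 1 d ▸ hL.mul hp
  exact ⟨L * p, hLp, map_mul (Ideal.Quotient.mk I) L p⟩

theorem mulMapSurj_of_mulMapInj (hL : L ∈ homogeneousSubmodule (Fin r) K 1)
    (hle : hilb r K I (d + 1) ≤ hilb r K I d) (hinj : mulMapInj r K I L d) :
    mulMapSurj r K I L d := by
  let f : component r K I d →ₗ[K] component r K I (d + 1) :=
    (LinearMap.mulLeft K (Ideal.Quotient.mk I L)).restrict fun _ ↦ mul_mem_component hL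
  have f_injective : Function.Injective f := (injective_iff_map_eq_zero f).2 fun a ha ↦
    Subtype.ext <| hinj a a.2 <| congrArg Subtype.val ha
  have := finite_component I d
  have := finite_component I (d + 1)
  have finrank_eq := (LinearMap.finrank_le_finrank_of_injective f_injective).antisymm hle
  intro b hb
  obtain ⟨a, ha⟩ := (LinearMap.injective_iff_surjective_of_finrank_eq_finrank finrank_eq).1
    f_injective ⟨b, hb⟩
  exact ⟨a, a.2, congrArg Subtype.val ha⟩

theorem not_hasWLP_of_forall_not_mulMapSurj (hle : hilb r K I (d + 1) ≤ hilb r K I d)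
    (hsurj : ∀ L ∈ homogeneousSubmodule (Fin r) K 1, ¬ mulMapSurj r K I L d) :
    ¬ hasWLP r K I := by
  rintro ⟨L, hL, maximal_rank⟩
  exact hsurj L hL <| (maximal_rank d).elim (mulMapSurj_of_mulMapInj hL hle) id

theorem not_mulMapSurj_of_linearMap {φ : MvPolynomial (Fin r) K →ₗ[K] K}
    (φ_ideal : ∀ p ∈ I, φ p = 0) (φ_mul : ∀ p, φ (L * p) = 0) {q : MvPolynomial (Fin r) K}
    (hq : q ∈ homogeneousSubmodule (Fin r) K (d + 1)) (φ_ne_zero : φ q ≠ 0) :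
    ¬ mulMapSurj r K I L d := by
  intro hsurj
  obtain ⟨_, ⟨p, -, rfl⟩, hp⟩ := hsurj (Ideal.Quotient.mk I q) ⟨q, hq, rfl⟩
  have sub_mem : L * p - q ∈ I := Ideal.Quotient.eq.1 hp
  have := φ_ideal _ sub_mem
  rw [map_sub, φ_mul, zero_sub, neg_eq_zero] at this
  exact φ_ne_zero this

theorem hilb_choose_two_le (K : Type*) [Field K] (hr : 3 ≤ r) :
    hilb r K (restrictSupportIdeal K _ (isUpperSet_powersProductExponents (Fin r) r))
        (r.choose 2) ≤
      hilb r K (restrictSupportIdeal K _ (isUpperSet_powersProductExponents (Fin r) r))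
        (r.choose 2 - 1) := by
  have one_le_choose : 1 ≤ r.choose 2 := Nat.choose_pos (by omega)
  have hr' : 1 ≤ r := by omega
  zify
  rw [hilb_restrictSupportIdeal_s9, hilb_restrictSupportIdeal_s9,
    ncard_degree_sdiff_powersProductExponents _ hr',
    ncard_degree_sdiff_powersProductExponents _ hr', Fintype.card_fin, Nat.cast_pred one_le_choose]
  exact coeff_choose_two_le hr

theorem not_mulMapSurj_restrictSupportIdeal (hr : 2 ≤ r)
    (hL : L ∈ homogeneousSubmodule (Fin r) K 1) :
    ¬ mulMapSurj r K
      (restrictSupportIdeal K _ (isUpperSet_powersProductExponents (Fin r) r)) L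
      (r.choose 2 - 1) := by
  rw [homogeneousSubmodule_one_eq_span_X, Submodule.mem_span_range_iff_exists_fun] at hL
  obtain ⟨c, rfl⟩ := hL
  obtain ⟨β, s, hβ⟩ := exists_perm_forall_iff_lt fun i ↦ c i ≠ 0
  refine not_mulMapSurj_of_linearMap (φ := vandermondeFunctional c β s)
    (fun p ↦ vandermondeFunctional_eq_zero_of_mem_restrictSupportIdeal (by omega))
    (vandermondeFunctional_linear_mul hβ) ?_
    (vandermondeFunctional_monomial_permExponent_ne_zero hβ)
  rw [Nat.sub_add_cancel (Nat.choose_pos hr)]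
  exact isHomogeneous_monomial 1 (degree_permExponent β)

end Lefschetz

/-- `R/(x₁^r, …, xᵣ^r, x₁⋯xᵣ)` fails to have the WLP; more precisely its Hilbert
function is non-increasing from degree `C(r,2)-1` to degree `C(r,2)`, yet for every
linear form `L` the multiplication map between these degrees is not surjective. -/
theorem stmt_9 {K : Type*} [Field K] (r : ℕ) (hr : 3 ≤ r) :
    letI Irr : Ideal (MvPolynomial (Fin r) K) :=
      Ideal.span ({p | ∃ i : Fin r, p = X i ^ r} ∪ {∏ i : Fin r, X i})
    letI m := Nat.choose r 2
    ¬ hasWLP r K Irr ∧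
    hilb r K Irr m ≤ hilb r K Irr (m - 1) ∧
    ∀ L ∈ MvPolynomial.homogeneousSubmodule (Fin r) K 1, ¬ mulMapSurj r K Irr L (m - 1) := by
  rw [span_pow_union_prod_eq_restrictSupportIdeal]
  have hilb_le := hilb_choose_two_le K hr
  have not_surj (L) (hL : L ∈ homogeneousSubmodule (Fin r) K 1) :=
    not_mulMapSurj_restrictSupportIdeal (by omega) hL
  have choose_pred_succ : r.choose 2 - 1 + 1 = r.choose 2 :=
    Nat.sub_add_cancel (Nat.choose_pos (by omega))
  exact ⟨not_hasWLP_of_forall_not_mulMapSurj (choose_pred_succ.symm ▸ hilb_le) not_surj,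
    hilb_le, not_surj⟩
end

section
/- Let K be a field, r ≥ 3, R = K[x_1,…,x_r], I_{r,r} = (x_1^r,…,x_r^r, x_1 x_2 ⋯ x_r), and 𝔍_r = (x_1^r,…,x_r^r, x_1 x_2 ⋯ x_{r−1}·(x_1 + x_r)). Then R/𝔍_r and R/I_{r,r} have the same Hilbert function, i.e. dim_K (R/𝔍_r)_j = dim_K (R/I_{r,r})_j for all j. -/
open MvPolynomial

/-! Let `P = (x_i ^ n_i)`. Modulo `P` the ideal `I = P + (∏ x_i)` is spanned by the monomials
`x ^ u` with `0 < u_i < n_i` for all `i`. Sending such a monomial `x_b x ^ v` to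
`(x_a + x_b) x ^ v`, and fixing all other monomials, defines a degree-preserving linear endomorphism
`1 + N` of the polynomial ring. It is bijective because `N` raises the exponent of `x_a` and so is
nilpotent. It maps `I` into `J = P + ((x_a + x_b) ∏_{i ≠ b} x_i)`, and onto it when `n_a ≤ n_b`:
trading `x_b` for `x_a` repeatedly shows that a multiple of `∏_{i ≠ b} x_i` whose exponents at `a`
and `b` add up to at least `n_b` lies in the image, since eventually some exponent reaches its
bound `n_i`. -/

section LinearAlgebra

variable {R M M₁ M₂ : Type*} [Ring R] [AddCommGroup M] [AddCommGroup M₁] [AddCommGroup M₂]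
  [Module R M] [Module R M₁] [Module R M₂]

lemma finrank_map_eq_of_ker_eq {f : M →ₗ[R] M₁} {g : M →ₗ[R] M₂} (h : f.ker = g.ker)
    (p : Submodule R M) : Module.finrank R (p.map f) = Module.finrank R (p.map g) := by
  have hker : (f.domRestrict p).ker = (g.domRestrict p).ker := by
    rw [LinearMap.ker_domRestrict, LinearMap.ker_domRestrict, h]
  rw [← LinearMap.range_domRestrict, ← LinearMap.range_domRestrict]
  exact ((f.domRestrict p).quotKerEquivRange.symm.trans
    ((Submodule.quotEquivOfEq _ _ hker).trans (g.domRestrict p).quotKerEquivRange)).finrank_eq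

lemma bijective_one_add_of_isNilpotent {f : Module.End R M} (hf : IsNilpotent f) :
    Function.Bijective (1 + f : Module.End R M) :=
  (Module.End.isUnit_iff _).1 hf.isUnit_one_add

lemma map_one_add_eq_of_isNilpotent {f : Module.End R M} (hf : IsNilpotent f)
    {p : Submodule R M} (hp : p ≤ p.comap f) : p.map (1 + f) = p := by
  apply le_antisymm
  · rintro _ ⟨x, hx, rfl⟩
    exact p.add_mem hx (hp hx)
  · intro y hy
    obtain ⟨x, hx⟩ := (bijective_one_add_of_isNilpotent
      (Module.End.isNilpotent.restrict hp hf)).surjective ⟨y, hy⟩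
    exact ⟨x, x.2, congrArg Subtype.val hx⟩

end LinearAlgebra

lemma finrank_map_mkₐ_eq_of_map_eq {R A : Type*} [CommRing R] [CommRing A] [Algebra R A]
    {I J : Ideal A} {e : Module.End R A} (he : Function.Injective e)
    (hIJ : (I.restrictScalars R).map e = J.restrictScalars R)
    {p : Submodule R A} (hp : p.map e = p) :
    Module.finrank R (p.map (Ideal.Quotient.mkₐ R J).toLinearMap) =
      Module.finrank R (p.map (Ideal.Quotient.mkₐ R I).toLinearMap) := by
  have hmk (L : Ideal A) : (Ideal.Quotient.mkₐ R L).toLinearMap.ker = L.restrictScalars R := by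
    ext x
    exact Ideal.Quotient.eq_zero_iff_mem
  have hker : ((Ideal.Quotient.mkₐ R J).toLinearMap ∘ₗ e).ker =
      (Ideal.Quotient.mkₐ R I).toLinearMap.ker := by
    rw [LinearMap.ker_comp, hmk, hmk, ← hIJ, Submodule.comap_map_eq_of_injective he]
  rw [← finrank_map_eq_of_ker_eq hker, Submodule.map_comp, hp]

section Monomials

open Finsupp (single)

variable {σ R : Type*} [CommSemiring R]

lemma restrictScalars_span_le_iff_monomial_mul_mem {S : Set (MvPolynomial σ R)}
    {W : Submodule R (MvPolynomial σ R)} :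
    (Ideal.span S).restrictScalars R ≤ W ↔ ∀ s ∈ S, ∀ u, monomial u (1 : R) * s ∈ W := by
  rw [Ideal.span, ← Submodule.span_smul_of_span_eq_top (basisMonomials σ R).span_eq,
    Submodule.span_le, Set.smul_subset_iff]
  simp only [coe_basisMonomials, Set.forall_mem_range, smul_eq_mul, SetLike.mem_coe]
  exact ⟨fun h s hs u => h u s hs, fun h u s hs => h s hs u⟩

lemma constr_basisMonomials_monomial {M : Type*} [AddCommMonoid M] [Module R M]
    (f : (σ →₀ ℕ) → M) (u : σ →₀ ℕ) :
    (basisMonomials σ R).constr R f (monomial u 1) = f u := by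
  simpa only [coe_basisMonomials] using (basisMonomials σ R).constr_basis R f u

lemma monomial_mul_X_add_X (u : σ →₀ ℕ) (a b : σ) :
    monomial u (1 : R) * (X a + X b) =
      monomial (u + single a 1) 1 + monomial (u + single b 1) 1 := by
  simp only [mul_add, X, monomial_mul, mul_one]

lemma prod_X_eq_monomial (s : Finset σ) :
    ∏ i ∈ s, X i = monomial (∑ i ∈ s, single i 1) (1 : R) := by
  simp only [X, monomial_sum_one]

lemma sum_single_one_apply [DecidableEq σ] (s : Finset σ) (i : σ) :
    (∑ j ∈ s, single j 1 : σ →₀ ℕ) i = if i ∈ s then 1 else 0 := by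
  simp [Finsupp.finsetSum_apply, Finsupp.single_apply]

lemma prod_X_dvd_monomial {s : Finset σ} {u : σ →₀ ℕ} (hu : ∀ i ∈ s, 0 < u i) :
    ∏ i ∈ s, X i ∣ monomial u (1 : R) := by
  classical
  rw [prod_X_eq_monomial, monomial_dvd_monomial]
  refine ⟨.inr fun i => ?_, dvd_rfl⟩
  rw [sum_single_one_apply]
  split_ifs with hi
  exacts [hu i hi, Nat.zero_le _]

lemma exists_monomial_mul_prod_X_eq (w : σ →₀ ℕ) (s : Finset σ) :
    ∃ u : σ →₀ ℕ, (∀ i ∈ s, 0 < u i) ∧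
      monomial w (1 : R) * ∏ i ∈ s, X i = monomial u 1 := by
  classical
  refine ⟨w + ∑ i ∈ s, single i 1, fun i hi => ?_, ?_⟩
  · rw [Finsupp.add_apply, sum_single_one_apply, if_pos hi]
    exact Nat.succ_pos _
  · rw [prod_X_eq_monomial, monomial_mul, mul_one]

lemma exists_eq_add_single_one {u : σ →₀ ℕ} {b : σ} (hb : 0 < u b) :
    ∃ v, u = v + single b 1 :=
  le_iff_exists_add'.1 (Finsupp.single_le_iff.2 hb)

end Monomials

section OpenBox

open Finsupp (single)

variable {σ : Type*}

/-- The exponents `u` with `0 < u i < n i` for all `i`. They index the monomials that are divisible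
by every variable but by no `X i ^ n i`. -/
def openBox (n : σ → ℕ) : Set (σ →₀ ℕ) := {u | ∀ i, 0 < u i ∧ u i < n i}

lemma notMem_openBox_of_le {n : σ → ℕ} {u : σ →₀ ℕ} {i : σ} (hi : n i ≤ u i) : u ∉ openBox n :=
  fun hu => (hu i).2.not_ge hi

lemma mem_openBox_or_exists_le {n : σ → ℕ} {u : σ →₀ ℕ} (hu : ∀ i, 0 < u i) :
    u ∈ openBox n ∨ ∃ i, n i ≤ u i := by
  by_contra! h
  exact h.1 fun i => ⟨hu i, h.2 i⟩

variable (R : Type*) [CommSemiring R] (n : σ → ℕ) (a b : σ)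

/-- The linear map `N` with `N (x ^ u) = x ^ u * x_a / x_b` for `u` in `openBox n` and
`N (x ^ u) = 0` for all other `u`. The truncated subtraction is exact on `openBox n`, where the
exponent of `x_b` is positive. -/
noncomputable def boxExchange : Module.End R (MvPolynomial σ R) :=
  (basisMonomials σ R).constr R
    ((openBox n).indicator fun u => monomial (u - single b 1 + single a 1) 1)

variable {R n a b} {u : σ →₀ ℕ}

lemma boxExchange_monomial_add_single (hu : u + single b 1 ∈ openBox n) :
    boxExchange R n a b (monomial (u + single b 1) 1) = monomial (u + single a 1) 1 := by
  rw [boxExchange, constr_basisMonomials_monomial, Set.indicator_of_mem hu, add_tsub_cancel_right]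

lemma boxExchange_monomial_of_notMem (hu : u ∉ openBox n) :
    boxExchange R n a b (monomial u 1) = 0 := by
  rw [boxExchange, constr_basisMonomials_monomial, Set.indicator_of_notMem hu]

lemma one_add_boxExchange_monomial_add_single (hu : u + single b 1 ∈ openBox n) :
    (1 + boxExchange R n a b) (monomial (u + single b 1) 1) = monomial u 1 * (X a + X b) := by
  rw [LinearMap.add_apply, Module.End.one_apply, boxExchange_monomial_add_single hu,
    monomial_mul_X_add_X, add_comm]

lemma one_add_boxExchange_monomial_of_notMem (hu : u ∉ openBox n) :
    (1 + boxExchange R n a b) (monomial u 1) = monomial u 1 := by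
  rw [LinearMap.add_apply, Module.End.one_apply, boxExchange_monomial_of_notMem hu, add_zero]

lemma boxExchange_pow_monomial_eq_zero (hab : a ≠ b) (k : ℕ) (hu : n a ≤ u a + k) :
    (boxExchange R n a b ^ (k + 1)) (monomial u 1) = 0 := by
  induction k generalizing u with
  | zero => simpa using boxExchange_monomial_of_notMem (notMem_openBox_of_le hu)
  | succ k ih =>
    rw [pow_succ, Module.End.mul_apply]
    by_cases hbox : u ∈ openBox n
    · obtain ⟨v, rfl⟩ := exists_eq_add_single_one (hbox b).1
      rw [boxExchange_monomial_add_single hbox]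
      apply ih
      simp only [Finsupp.add_apply, Finsupp.single_eq_same, Finsupp.single_eq_of_ne hab] at hu ⊢
      omega
    · rw [boxExchange_monomial_of_notMem hbox, map_zero]

lemma isNilpotent_boxExchange (hab : a ≠ b) : IsNilpotent (boxExchange R n a b) := by
  refine ⟨n a + 1, (basisMonomials σ R).ext fun u => ?_⟩
  rw [coe_basisMonomials]
  exact boxExchange_pow_monomial_eq_zero hab (n a) (Nat.le_add_left _ _)

lemma homogeneousSubmodule_le_comap_boxExchange (d : ℕ) :
    homogeneousSubmodule σ R d ≤ (homogeneousSubmodule σ R d).comap (boxExchange R n a b) := by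
  have hspan : homogeneousSubmodule σ R d =
      Submodule.span R ((monomial · 1) '' {u | u.degree = d}) :=
    (homogeneousSubmodule_eq_finsupp_supported σ R d).trans (restrictSupport_eq_span R _)
  refine hspan.le.trans (Submodule.span_le.2 ?_)
  rintro _ ⟨u, rfl, rfl⟩
  rw [SetLike.mem_coe, Submodule.mem_comap]
  by_cases hu : u ∈ openBox n
  · obtain ⟨v, rfl⟩ := exists_eq_add_single_one (hu b).1
    rw [boxExchange_monomial_add_single hu]
    exact isHomogeneous_monomial _ (by simp)
  · rw [boxExchange_monomial_of_notMem hu]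
    exact zero_mem _

end OpenBox

section PowersAndForm

open Finsupp (single)

variable {σ R : Type*} [CommRing R] {n : σ → ℕ} {a b : σ} {u : σ →₀ ℕ}

/-- The ideal generated by the powers `X i ^ n i` and one further polynomial `f`. -/
noncomputable def spanPowersInsert (n : σ → ℕ) (f : MvPolynomial σ R) : Ideal (MvPolynomial σ R) :=
  Ideal.span ({p | ∃ i, p = X i ^ n i} ∪ {f})

lemma mem_spanPowersInsert_of_dvd {f p : MvPolynomial σ R} (h : f ∣ p) :
    p ∈ spanPowersInsert n f :=
  Ideal.mem_of_dvd _ h (Ideal.subset_span (.inr rfl))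

lemma monomial_mem_spanPowersInsert {f : MvPolynomial σ R} {i : σ} (hi : n i ≤ u i) :
    monomial u 1 ∈ spanPowersInsert n f := by
  refine Ideal.mem_of_dvd _ ?_ (Ideal.subset_span (.inl ⟨i, rfl⟩))
  rw [X_pow_eq_monomial, monomial_dvd_monomial]
  exact ⟨.inr (Finsupp.single_le_iff.2 hi), dvd_rfl⟩

lemma spanPowersInsert_le_iff {f : MvPolynomial σ R} {W : Submodule R (MvPolynomial σ R)} :
    (spanPowersInsert n f).restrictScalars R ≤ W ↔
      (∀ u i, n i ≤ u i → monomial u 1 ∈ W) ∧ ∀ u, monomial u 1 * f ∈ W := by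
  refine ⟨fun h => ⟨fun u i hi => h (monomial_mem_spanPowersInsert hi), fun u =>
    h (mem_spanPowersInsert_of_dvd (dvd_mul_left _ _))⟩, fun ⟨hpow, hf⟩ => ?_⟩
  refine restrictScalars_span_le_iff_monomial_mul_mem.2 ?_
  rintro _ (⟨i, rfl⟩ | rfl) u
  · rw [X_pow_eq_monomial, monomial_mul, mul_one]
    exact hpow _ i (by simp)
  · exact hf u

variable [Fintype σ]

/-- The image of the ideal `(X i ^ n i, ∏ i, X i)` under the linear map `1 + boxExchange R n a b`.
It is only a submodule a priori, since this map is not multiplicative. -/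
noncomputable def exchangeImage (R : Type*) [CommRing R] (n : σ → ℕ) (a b : σ) :
    Submodule R (MvPolynomial σ R) :=
  ((spanPowersInsert n (∏ i, X i)).restrictScalars R).map (1 + boxExchange R n a b)

lemma monomial_mem_exchangeImage_of_le {i : σ} (hi : n i ≤ u i) :
    monomial u 1 ∈ exchangeImage R n a b :=
  ⟨monomial u 1, monomial_mem_spanPowersInsert hi,
    one_add_boxExchange_monomial_of_notMem (notMem_openBox_of_le hi)⟩

lemma monomial_mul_X_add_X_mem_exchangeImage_of_mem_openBox (hu : u + single b 1 ∈ openBox n) :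
    monomial u 1 * (X a + X b) ∈ exchangeImage R n a b :=
  ⟨monomial (u + single b 1) 1,
    mem_spanPowersInsert_of_dvd (prod_X_dvd_monomial fun i _ => (hu i).1),
    one_add_boxExchange_monomial_add_single hu⟩

lemma monomial_mem_exchangeImage_of_le_add (hab : a ≠ b) (hn : n a ≤ n b)
    (hu : ∀ i ≠ b, 0 < u i) (hsum : n b ≤ u a + u b) :
    monomial u 1 ∈ exchangeImage R n a b := by
  induction hk : u b generalizing u with
  | zero => exact monomial_mem_exchangeImage_of_le (i := a) (by omega)
  | succ k ih =>
    have hpos (i : σ) : 0 < u i := by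
      rcases eq_or_ne i b with rfl | hi
      exacts [by omega, hu i hi]
    rcases mem_openBox_or_exists_le (n := n) hpos with hbox | ⟨i, hi⟩
    · obtain ⟨v, rfl⟩ := exists_eq_add_single_one (hpos b)
      have hexchanged : monomial (v + single a 1) 1 ∈ exchangeImage R n a b := by
        refine ih (fun i hi => ?_) ?_ ?_
        · have hpos_i := hu i hi
          simp only [Finsupp.add_apply, Finsupp.single_eq_of_ne hi] at hpos_i ⊢
          omega
        · simp only [Finsupp.add_apply, Finsupp.single_eq_same, Finsupp.single_eq_of_ne hab,
            Finsupp.single_eq_of_ne hab.symm] at hsum ⊢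
          omega
        · simpa [hab] using hk
      have hadd := monomial_mul_X_add_X_mem_exchangeImage_of_mem_openBox (R := R) (a := a) hbox
      rw [monomial_mul_X_add_X] at hadd
      exact (Submodule.add_mem_iff_right _ hexchanged).1 hadd
    · exact monomial_mem_exchangeImage_of_le hi

lemma monomial_mul_X_add_X_mem_exchangeImage (hab : a ≠ b) (hn : n a ≤ n b)
    (hu : ∀ i ≠ b, 0 < u i) :
    monomial u 1 * (X a + X b) ∈ exchangeImage R n a b := by
  have hpos (i : σ) : 0 < (u + single b 1 : σ →₀ ℕ) i := by
    rcases eq_or_ne i b with rfl | hi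
    exacts [by simp, by simp [hu i hi]]
  rcases mem_openBox_or_exists_le (n := n) hpos with hbox | ⟨i, hi⟩
  · exact monomial_mul_X_add_X_mem_exchangeImage_of_mem_openBox hbox
  · rw [monomial_mul_X_add_X]
    refine add_mem ?_ (monomial_mem_exchangeImage_of_le hi)
    rcases eq_or_ne i b with rfl | hib
    · refine monomial_mem_exchangeImage_of_le_add hab hn (fun j hj => by simp [hu j hj]) ?_
      simp only [Finsupp.add_apply, Finsupp.single_eq_same, Finsupp.single_eq_of_ne hab.symm]
        at hi ⊢
      omega
    · refine monomial_mem_exchangeImage_of_le (i := i) ?_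
      simp only [Finsupp.add_apply, Finsupp.single_eq_of_ne hib] at hi ⊢
      omega

variable [DecidableEq σ]

lemma exchangeImage_le_spanPowersInsert :
    exchangeImage R n a b ≤
      (spanPowersInsert n ((∏ i ∈ Finset.univ.erase b, X i) * (X a + X b))).restrictScalars R := by
  have hpow (u : σ →₀ ℕ) (i : σ) (hi : n i ≤ u i) : (1 + boxExchange R n a b) (monomial u 1) ∈
      spanPowersInsert n ((∏ i ∈ Finset.univ.erase b, X i) * (X a + X b)) := by
    rw [one_add_boxExchange_monomial_of_notMem (notMem_openBox_of_le hi)]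
    exact monomial_mem_spanPowersInsert hi
  refine Submodule.map_le_iff_le_comap.2 (spanPowersInsert_le_iff.2 ⟨hpow, fun w => ?_⟩)
  obtain ⟨u, hu, hwu⟩ := exists_monomial_mul_prod_X_eq (R := R) w Finset.univ
  rw [hwu, Submodule.mem_comap]
  have hpos (i : σ) : 0 < u i := hu i (Finset.mem_univ i)
  rcases mem_openBox_or_exists_le (n := n) hpos with hbox | ⟨i, hi⟩
  · obtain ⟨v, rfl⟩ := exists_eq_add_single_one (hpos b)
    rw [one_add_boxExchange_monomial_add_single hbox]
    refine mem_spanPowersInsert_of_dvd (mul_dvd_mul_right (prod_X_dvd_monomial fun i hi => ?_) _)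
    simpa [(Finset.ne_of_mem_erase hi).symm] using hpos i
  · exact hpow u i hi

lemma spanPowersInsert_le_exchangeImage (hab : a ≠ b) (hn : n a ≤ n b) :
    (spanPowersInsert n ((∏ i ∈ Finset.univ.erase b, X i) * (X a + X b))).restrictScalars R ≤
      exchangeImage R n a b := by
  refine spanPowersInsert_le_iff.2 ⟨fun u i hi => monomial_mem_exchangeImage_of_le hi, fun w => ?_⟩
  obtain ⟨u, hu, hwu⟩ := exists_monomial_mul_prod_X_eq (R := R) w (Finset.univ.erase b)
  rw [← mul_assoc, hwu]
  exact monomial_mul_X_add_X_mem_exchangeImage hab hn fun i hi =>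
    hu i (Finset.mem_erase.2 ⟨hi, Finset.mem_univ i⟩)

theorem exchangeImage_eq (hab : a ≠ b) (hn : n a ≤ n b) :
    exchangeImage R n a b =
      (spanPowersInsert n ((∏ i ∈ Finset.univ.erase b, X i) * (X a + X b))).restrictScalars R :=
  le_antisymm exchangeImage_le_spanPowersInsert (spanPowersInsert_le_exchangeImage hab hn)

end PowersAndForm

theorem stmt_10_general {σ R : Type*} [Fintype σ] [DecidableEq σ] [CommRing R] {n : σ → ℕ}
    {a b : σ} (hab : a ≠ b) (hn : n a ≤ n b) (d : ℕ) :
    letI I := spanPowersInsert n (∏ i, X i : MvPolynomial σ R)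
    letI J := spanPowersInsert n ((∏ i ∈ Finset.univ.erase b, X i) * (X a + X b) :
      MvPolynomial σ R)
    Module.finrank R ((homogeneousSubmodule σ R d).map (Ideal.Quotient.mkₐ R J).toLinearMap) =
      Module.finrank R ((homogeneousSubmodule σ R d).map (Ideal.Quotient.mkₐ R I).toLinearMap) := by
  have hN : IsNilpotent (boxExchange R n a b) := isNilpotent_boxExchange hab
  exact finrank_map_mkₐ_eq_of_map_eq (bijective_one_add_of_isNilpotent hN).injective
    (exchangeImage_eq hab hn)
    (map_one_add_eq_of_isNilpotent hN (homogeneousSubmodule_le_comap_boxExchange d))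

lemma filter_val_lt_pred_eq_erase {r : ℕ} (h : r - 1 < r) :
    Finset.univ.filter (fun i : Fin r => (i : ℕ) < r - 1) = Finset.univ.erase ⟨r - 1, h⟩ := by
  ext i
  simp only [Finset.mem_filter_univ, Finset.mem_erase, Finset.mem_univ, and_true, ne_eq,
    Fin.ext_iff]
  omega

/-- `R/(x₁^r,…,xᵣ^r, x₁⋯x_{r-1}(x₁+xᵣ))` and `R/(x₁^r,…,xᵣ^r, x₁⋯xᵣ)` have the
same Hilbert function. -/
theorem stmt_10 {K : Type*} [Field K] (r : ℕ) (hr : 3 ≤ r) :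
    letI Irr : Ideal (MvPolynomial (Fin r) K) :=
      Ideal.span ({p | ∃ i : Fin r, p = X i ^ r} ∪ {∏ i : Fin r, X i})
    letI Jr : Ideal (MvPolynomial (Fin r) K) :=
      Ideal.span ({p | ∃ i : Fin r, p = X i ^ r} ∪
        {(∏ i ∈ Finset.univ.filter (fun i : Fin r => (i : ℕ) < r - 1), X i) *
          (X (⟨0, by omega⟩ : Fin r) + X (⟨r - 1, by omega⟩ : Fin r))})
    ∀ j : ℕ, hilb r K Jr j = hilb r K Irr j := by
  intro j
  rw [filter_val_lt_pred_eq_erase]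
  exact stmt_10_general (n := fun _ => r) (Fin.ne_of_val_ne (show 0 ≠ r - 1 by omega)) le_rfl j
end

section
/- For every field K, the Artinian algebra K[x,y,z]/(x^3, y^3, z^3, xy(x+z)) has the WLP if and only if the characteristic of K is not 3. -/
open MvPolynomial

/-!
Let `I = (x³, y³, z³, xy(x+z))` and `A = K[x,y,z]/I`. As `I` vanishes in degrees below `3`, a
nonzero linear form acts injectively on `A₀` and `A₁`. The cokernel of `×L : A₂ → A₃` is the cubic
part of `A/LA`.

If `3 ≠ 0`, take `L = x + y + z`. Eliminating `z` turns the relations into `x³`, `y³`, `xy²` and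
`3x²y`, so every cubic dies in `A/LA`; surjectivity then persists in all higher degrees.

If `char K = 3`, every linear form satisfies `L³ ∈ (x³, y³, z³)`, so `L²` is a nonzero element of
`A₂` killed by `L`. As `dim A₂ ≤ 6 ≤ dim A₃`, the map `×L : A₂ → A₃` is not surjective either.
-/

namespace WeakLefschetz

lemma pow_expChar_mem_of_mem_span {A : Type*} [CommSemiring A] (p : ℕ) [ExpChar A p] {s : Set A}
    {I : Ideal A} (hs : ∀ x ∈ s, x ^ p ∈ I) {a : A} (ha : a ∈ Ideal.span s) : a ^ p ∈ I := by
  have span_le : Ideal.span s ≤ I.comap (frobenius A p) := Ideal.span_le.2 hs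
  exact span_le ha

section MvPolynomial

variable {σ R : Type*} [CommSemiring R]

attribute [local instance] MvPolynomial.gradedAlgebra in
lemma homogeneousComponent_mul_of_isHomogeneous_left {m : ℕ} {p : MvPolynomial σ R}
    (hp : p.IsHomogeneous m) (n : ℕ) (q : MvPolynomial σ R) :
    homogeneousComponent (m + n) (p * q) = p * homogeneousComponent n q := by
  simp only [← decomposition.decompose'_apply]
  exact DirectSum.coe_decompose_mul_add_of_left_mem (homogeneousSubmodule σ R) hp

lemma mem_pow_idealOfVars_of_isHomogeneous {n : ℕ} {p : MvPolynomial σ R}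
    (hp : p.IsHomogeneous n) : p ∈ idealOfVars σ R ^ n :=
  (mem_pow_idealOfVars_iff' n p).2 fun _ hm ↦ hp.coeff_eq_zero hm.ne

lemma eq_zero_of_isHomogeneous_of_mem_pow_idealOfVars {m n : ℕ} (hmn : m < n)
    {p : MvPolynomial σ R} (hp : p.IsHomogeneous m) (h : p ∈ idealOfVars σ R ^ n) : p = 0 := by
  rw [← homogeneousComponent_eq_self hp]
  refine homogeneousComponent_eq_zero' m p fun x hx ↦ ?_
  exact (hmn.trans_le ((mem_pow_idealOfVars_iff n p).1 h x hx)).ne'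

lemma mem_span_of_isHomogeneous_of_mem_ideal_span {ι : Type*} {n : ℕ}
    {f : ι → MvPolynomial σ R} (hf : ∀ i, (f i).IsHomogeneous n) {p : MvPolynomial σ R}
    (hp : p.IsHomogeneous n) (hpI : p ∈ Ideal.span (Set.range f)) :
    p ∈ Submodule.span R (Set.range f) := by
  obtain ⟨c, rfl⟩ := Finsupp.mem_ideal_span_range_iff_exists_finsupp.1 hpI
  rw [← homogeneousComponent_eq_self hp, map_finsuppSum]
  refine Submodule.finsuppSum_mem _ _ _ _ fun i _ ↦ ?_
  have component_eq : homogeneousComponent n (c i * f i) = coeff 0 (c i) • f i := by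
    rw [mul_comm, ← add_zero n, homogeneousComponent_mul_of_isHomogeneous_left (hf i),
      homogeneousComponent_zero, mul_comm, smul_eq_C_mul]
  rw [component_eq]
  exact Submodule.smul_mem _ _ (Submodule.subset_span ⟨i, rfl⟩)

lemma finrank_homogeneousSubmodule [StrongRankCondition R] [Fintype σ] (n : ℕ) :
    Module.finrank R (homogeneousSubmodule σ R n) = (Fintype.card σ).multichoose n := by
  classical
  have coe_finsuppAntidiag : {m : σ →₀ ℕ | m.degree = n} =
      (Finset.univ.finsuppAntidiag n : Finset (σ →₀ ℕ)) := by
    ext m; simp [Finsupp.degree_eq_sum]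
  rw [homogeneousSubmodule_eq_finsupp_supported, coe_finsuppAntidiag]
  refine (Module.finrank_eq_card_basis (basisRestrictSupport R _)).trans ?_
  simp [Finset.card_finsuppAntidiag_nat_eq_multichoose]

instance finite_homogeneousSubmodule [Finite σ] (n : ℕ) :
    Module.Finite R (homogeneousSubmodule σ R n) :=
  Module.Finite.iff_fg.2 (homogeneousSubmodule_fg σ R n)

end MvPolynomial

section Quotient

variable {r : ℕ} {K : Type*} [Field K] {I : Ideal (MvPolynomial (Fin r) K)}
  {L : MvPolynomial (Fin r) K}

instance finite_component (d : ℕ) : Module.Finite K (component r K I d) :=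
  Module.Finite.map _ _

lemma hilb_le_multichoose (d : ℕ) : hilb r K I d ≤ r.multichoose d := by
  have map_le : hilb r K I d ≤ Module.finrank K (homogeneousSubmodule (Fin r) K d) :=
    Submodule.finrank_map_le _ _
  rwa [finrank_homogeneousSubmodule, Fintype.card_fin] at map_le

lemma multichoose_le_hilb_add_card {ι : Type*} [Fintype ι] {n : ℕ}
    {f : ι → MvPolynomial (Fin r) K} (hf : ∀ i, (f i).IsHomogeneous n) :
    r.multichoose n ≤ hilb r K (Ideal.span (Set.range f)) n + Fintype.card ι := by
  let I := Ideal.span (Set.range f)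
  let V := homogeneousSubmodule (Fin r) K n
  let π : V →ₗ[K] MvPolynomial (Fin r) K ⧸ I := (Ideal.Quotient.mkₐ K I).toLinearMap.domRestrict V
  have finrank_range : Module.finrank K (LinearMap.range π) = hilb r K I n := by
    rw [LinearMap.range_domRestrict]; rfl
  have ker_le : (LinearMap.ker π).map V.subtype ≤ Submodule.span K (Set.range f) := by
    rintro _ ⟨⟨p, hp⟩, hker, rfl⟩
    exact mem_span_of_isHomogeneous_of_mem_ideal_span hf hp (Ideal.Quotient.eq_zero_iff_mem.1 hker)
  have finrank_ker : Module.finrank K (LinearMap.ker π) ≤ Fintype.card ι := by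
    rw [← Submodule.finrank_map_subtype_eq]
    have := FiniteDimensional.span_of_finite K (Set.finite_range f)
    exact (Submodule.finrank_mono ker_le).trans (finrank_range_le_card f)
  calc
    r.multichoose n = Module.finrank K V := by rw [finrank_homogeneousSubmodule, Fintype.card_fin]
    _ = hilb r K I n + Module.finrank K (LinearMap.ker π) := by
      rw [← finrank_range, LinearMap.finrank_range_add_finrank_ker]
    _ ≤ hilb r K I n + Fintype.card ι := by gcongr

lemma mulMapInj_of_le_pow_idealOfVars {n d : ℕ} (hI : I ≤ idealOfVars (Fin r) K ^ n)
    (hL : L.IsHomogeneous 1) (hL0 : L ≠ 0) (hd : d + 1 < n) : mulMapInj r K I L d := by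
  rintro _ ⟨p, hp, rfl⟩ hLp
  have hLp_mem : L * p ∈ I := by
    rw [← Ideal.Quotient.eq_zero_iff_mem, map_mul]; exact hLp
  have hLp_zero : L * p = 0 :=
    eq_zero_of_isHomogeneous_of_mem_pow_idealOfVars (by omega) (hL.mul hp) (hI hLp_mem)
  rw [(mul_eq_zero.1 hLp_zero).resolve_left hL0, map_zero]

lemma mulMapInj_of_mulMapSurj {d : ℕ} (hdim : hilb r K I d ≤ hilb r K I (d + 1))
    (hsurj : mulMapSurj r K I L d) : mulMapInj r K I L d := by
  let μ := (LinearMap.mulLeft K (Ideal.Quotient.mk I L)).domRestrict (component r K I d)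
  have component_le : component r K I (d + 1) ≤ LinearMap.range μ := fun b hb ↦ by
    obtain ⟨a, ha, rfl⟩ := hsurj b hb
    exact ⟨⟨a, ha⟩, rfl⟩
  have finrank_ker : Module.finrank K (LinearMap.ker μ) = 0 := by
    have rank_nullity : _ = hilb r K I d := LinearMap.finrank_range_add_finrank_ker μ
    have : hilb r K I (d + 1) ≤ _ := Submodule.finrank_mono component_le
    omega
  intro a ha hLa
  have hker : (⟨a, ha⟩ : component r K I d) ∈ LinearMap.ker μ := hLa
  rw [Submodule.finrank_eq_zero.1 finrank_ker] at hker
  exact congrArg Subtype.val ((Submodule.mem_bot K).1 hker)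

attribute [local instance] MvPolynomial.gradedAlgebra

lemma mulMapSurj_iff_pow_idealOfVars_le (hI : I.IsHomogeneous (homogeneousSubmodule (Fin r) K))
    (hL : L.IsHomogeneous 1) {d : ℕ} :
    mulMapSurj r K I L d ↔ idealOfVars (Fin r) K ^ (d + 1) ≤ I ⊔ Ideal.span {L} := by
  constructor
  · intro hsurj
    rw [pow_idealOfVars_eq_span, Ideal.span_le]
    rintro _ ⟨m, hm, rfl⟩
    obtain ⟨_, ⟨p, -, rfl⟩, hp⟩ :=
      hsurj _ ⟨monomial m 1, isHomogeneous_monomial 1 hm, rfl⟩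
    have hsub : monomial m 1 - L * p ∈ I := by
      rw [← Ideal.Quotient.eq, map_mul]; exact hp.symm
    exact Submodule.mem_sup.2 ⟨_, hsub, _, Ideal.mem_span_singleton'.2 ⟨p, mul_comm _ _⟩, by ring⟩
  · rintro hle _ ⟨q, hq, rfl⟩
    obtain ⟨i, hi, _, hLp, rfl⟩ :=
      Submodule.mem_sup.1 (hle (mem_pow_idealOfVars_of_isHomogeneous hq))
    obtain ⟨p, rfl⟩ := Ideal.mem_span_singleton.1 hLp
    refine ⟨_, ⟨_, homogeneousComponent_mem d p, rfl⟩, ?_⟩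
    have component_eq :
        i + L * p = homogeneousComponent (d + 1) i + L * homogeneousComponent d p := by
      rw [← homogeneousComponent_mul_of_isHomogeneous_left hL, add_comm 1 d, ← map_add,
        homogeneousComponent_eq_self hq]
    have component_mem : homogeneousComponent (d + 1) i ∈ I :=
      homogeneousComponent_mem_of_mem hI hi (d + 1)
    rw [component_eq]
    simp [Ideal.Quotient.eq_zero_iff_mem.2 component_mem]

lemma mulMapSurj_of_le (hI : I.IsHomogeneous (homogeneousSubmodule (Fin r) K))
    (hL : L.IsHomogeneous 1) {d e : ℕ} (hde : d ≤ e) (hsurj : mulMapSurj r K I L d) :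
    mulMapSurj r K I L e := by
  rw [mulMapSurj_iff_pow_idealOfVars_le hI hL] at hsurj ⊢
  exact (Ideal.pow_le_pow_right (by omega)).trans hsurj

theorem isLefschetzElem_of_mulMapSurj (hI : I.IsHomogeneous (homogeneousSubmodule (Fin r) K))
    {d : ℕ} (hId : I ≤ idealOfVars (Fin r) K ^ (d + 1)) (hL : L.IsHomogeneous 1) (hL0 : L ≠ 0)
    (hsurj : mulMapSurj r K I L d) : isLefschetzElem r K I L := by
  refine ⟨hL, fun e ↦ ?_⟩
  obtain hed | hde := lt_or_ge e d
  · exact .inl (mulMapInj_of_le_pow_idealOfVars hId hL hL0 (by omega))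
  · exact .inr (mulMapSurj_of_le hI hL hde hsurj)

section CharP

variable {p : ℕ} [Fact p.Prime] [CharP K p]

/- The kernel contains `L ^ (p - 1)`, because `L ^ p` is a combination of the `X i ^ p`. -/
lemma not_mulMapInj_of_X_pow_char_mem [NeZero r] (hIp : I ≤ idealOfVars (Fin r) K ^ p)
    (hX : ∀ i, X i ^ p ∈ I) (hL : L.IsHomogeneous 1) : ¬ mulMapInj r K I L (p - 1) := by
  intro hinj
  have hp : p - 1 + 1 = p := Nat.sub_add_cancel (Fact.out : p.Prime).one_le
  obtain ⟨ℓ, hℓ, hℓ0, hLℓ⟩ :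
      ∃ ℓ : MvPolynomial (Fin r) K, ℓ.IsHomogeneous 1 ∧ ℓ ≠ 0 ∧ L * ℓ ^ (p - 1) ∈ I := by
    obtain rfl | hL0 := eq_or_ne L 0
    · exact ⟨X 0, isHomogeneous_X K 0, X_ne_zero 0, by simp⟩
    · refine ⟨L, hL, hL0, ?_⟩
      rw [← pow_succ', hp]
      have hL_mem : L ∈ idealOfVars (Fin r) K := by
        simpa using mem_pow_idealOfVars_of_isHomogeneous hL
      exact pow_expChar_mem_of_mem_span p (by simpa using hX) hL_mem
  have hℓ_homog : (ℓ ^ (p - 1)).IsHomogeneous (p - 1) := by simpa using hℓ.pow (p - 1)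
  have hℓ_mem : ℓ ^ (p - 1) ∈ I := by
    rw [← Ideal.Quotient.eq_zero_iff_mem]
    refine hinj _ ⟨_, hℓ_homog, rfl⟩ ?_
    rwa [← map_mul, Ideal.Quotient.eq_zero_iff_mem]
  exact pow_ne_zero _ hℓ0
    (eq_zero_of_isHomogeneous_of_mem_pow_idealOfVars (by omega) hℓ_homog (hIp hℓ_mem))

theorem not_hasWLP_of_X_pow_char_mem [NeZero r] (hIp : I ≤ idealOfVars (Fin r) K ^ p)
    (hX : ∀ i, X i ^ p ∈ I) (hdim : hilb r K I (p - 1) ≤ hilb r K I p) : ¬ hasWLP r K I := by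
  rintro ⟨L, hL, hrank⟩
  have hinj := not_mulMapInj_of_X_pow_char_mem hIp hX hL
  have hp : p - 1 + 1 = p := Nat.sub_add_cancel (Fact.out : p.Prime).one_le
  exact hinj ((hrank (p - 1)).elim id (mulMapInj_of_mulMapSurj (hp.symm ▸ hdim)))

end CharP

end Quotient

section Cubics

open scoped Pointwise in
lemma span_pair_pow_three_eq_bot {A : Type*} [CommRing A] {x y : A} (hx : x ^ 3 = 0)
    (hxxy : x ^ 2 * y = 0) (hxyy : x * y ^ 2 = 0) (hy : y ^ 3 = 0) :
    Ideal.span {x, y} ^ 3 = ⊥ := by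
  rw [Ideal.span, Submodule.span_pow, Submodule.span_eq_bot, pow_three]
  rintro _ ⟨a, ha, _, ⟨b, hb, c, hc, rfl⟩, rfl⟩
  rcases ha with rfl | rfl <;> rcases hb with rfl | rfl <;> rcases hc with rfl | rfl <;>
  grind

lemma span_range_pow_three_eq_bot {A : Type*} [CommRing A] (h3 : IsUnit (3 : A)) {x : Fin 3 → A}
    (hcube : ∀ i, x i ^ 3 = 0) (hmixed : x 0 * x 1 * (x 0 + x 2) = 0)
    (hsum : x 0 + x 1 + x 2 = 0) : Ideal.span (Set.range x) ^ 3 = ⊥ := by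
  have hx2 : x 2 = -(x 0 + x 1) := by linear_combination hsum
  have hxyy : x 0 * x 1 ^ 2 = 0 := by linear_combination x 0 * x 1 * hsum - hmixed
  have hxxy : x 0 ^ 2 * x 1 = 0 := by
    have sum_cube : (x 0 + x 1) ^ 3 = 0 := by
      rw [← neg_eq_zero, ← Odd.neg_pow (by decide), ← hx2, hcube]
    refine h3.mul_right_eq_zero.1 ?_
    linear_combination sum_cube - hcube 0 - hcube 1 - 3 * hxyy
  have span_le : Ideal.span (Set.range x) ≤ Ideal.span {x 0, x 1} := by
    rw [Ideal.span_le, Set.range_subset_iff, Fin.forall_iff_succ, Fin.forall_fin_two]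
    refine ⟨Ideal.subset_span (by simp), Ideal.subset_span (by simp), ?_⟩
    exact Ideal.mem_span_pair.2 ⟨-1, -1, by change _ = x 2; linear_combination -hx2⟩
  rw [eq_bot_iff, ← span_pair_pow_three_eq_bot (hcube 0) hxxy hxyy (hcube 1)]
  exact Ideal.pow_right_mono span_le 3

variable (K : Type*) [Field K]

/-- The four cubic forms `x³, y³, z³, xy(x+z)` generating the ideal under study, as a family so
that its length bounds the number of generators. -/
noncomputable def cubics : Fin 4 → MvPolynomial (Fin 3) K :=
  ![X 0 ^ 3, X 1 ^ 3, X 2 ^ 3, X 0 * X 1 * (X 0 + X 2)]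

/-- The ideal `(x³, y³, z³, xy(x+z))` of `K[x,y,z]`. -/
noncomputable def cubicIdeal : Ideal (MvPolynomial (Fin 3) K) :=
  Ideal.span (Set.range (cubics K))

lemma cubicIdeal_eq_span :
    cubicIdeal K =
      Ideal.span {X 0 ^ 3, X 1 ^ 3, X 2 ^ 3, X 0 * X 1 * (X 0 + X 2)} := by
  simp only [cubicIdeal, cubics, Matrix.range_cons, Matrix.range_empty, Set.union_empty,
    Set.singleton_union]

lemma isHomogeneous_cubics (i : Fin 4) : (cubics K i).IsHomogeneous 3 := by
  have hX := isHomogeneous_X K (σ := Fin 3)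
  fin_cases i
  · exact (hX 0).pow 3
  · exact (hX 1).pow 3
  · exact (hX 2).pow 3
  · exact ((hX 0).mul (hX 1)).mul ((hX 0).add (hX 2))

attribute [local instance] MvPolynomial.gradedAlgebra in
lemma isHomogeneous_cubicIdeal :
    (cubicIdeal K).IsHomogeneous (homogeneousSubmodule (Fin 3) K) :=
  Ideal.homogeneous_span _ _ (Set.forall_mem_range.2 fun i ↦ ⟨3, isHomogeneous_cubics K i⟩)

lemma cubicIdeal_le_pow_idealOfVars : cubicIdeal K ≤ idealOfVars (Fin 3) K ^ 3 :=
  Ideal.span_le.2 <| Set.range_subset_iff.2 fun i ↦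
    mem_pow_idealOfVars_of_isHomogeneous (isHomogeneous_cubics K i)

lemma X_pow_three_mem_cubicIdeal (i : Fin 3) : X i ^ 3 ∈ cubicIdeal K :=
  Ideal.subset_span ⟨i.castSucc, by fin_cases i <;> rfl⟩

lemma hilb_cubicIdeal_two_le_three :
    hilb 3 K (cubicIdeal K) 2 ≤ hilb 3 K (cubicIdeal K) 3 := by
  have upper : hilb 3 K (cubicIdeal K) 2 ≤ Nat.multichoose 3 2 := hilb_le_multichoose 2
  have lower : Nat.multichoose 3 3 ≤ hilb 3 K (cubicIdeal K) 3 + Fintype.card (Fin 4) :=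
    multichoose_le_hilb_add_card (isHomogeneous_cubics K)
  have multichoose_two : Nat.multichoose 3 2 = 6 := Nat.multichoose_eq 3 2
  have multichoose_three : Nat.multichoose 3 3 = 10 := Nat.multichoose_eq 3 3
  rw [Fintype.card_fin] at lower
  omega

variable {K}

lemma pow_three_idealOfVars_le_cubicIdeal_sup (h3 : (3 : K) ≠ 0) :
    idealOfVars (Fin 3) K ^ 3 ≤ cubicIdeal K ⊔ Ideal.span {X 0 + X 1 + X 2} := by
  set J := cubicIdeal K ⊔ Ideal.span {X 0 + X 1 + X 2}
  have relation {p : MvPolynomial (Fin 3) K} (hp : p ∈ cubicIdeal K) : Ideal.Quotient.mk J p = 0 :=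
    Ideal.Quotient.eq_zero_iff_mem.2 (Ideal.mem_sup_left hp)
  have isUnit_three : IsUnit (3 : MvPolynomial (Fin 3) K ⧸ J) := by
    simpa only [map_ofNat] using h3.isUnit.map (algebraMap K (MvPolynomial (Fin 3) K ⧸ J))
  have map_pow_eq_bot : (idealOfVars (Fin 3) K ^ 3).map (Ideal.Quotient.mk J) = ⊥ := by
    rw [Ideal.map_pow, Ideal.map_span, ← Set.range_comp]
    refine span_range_pow_three_eq_bot isUnit_three (fun i ↦ ?_) ?_ ?_
    · simpa using relation (X_pow_three_mem_cubicIdeal K i)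
    · simpa [cubics] using relation (Ideal.subset_span ⟨3, rfl⟩)
    · have := Ideal.Quotient.eq_zero_iff_mem.2
        (Ideal.mem_sup_right (Ideal.mem_span_singleton_self (X 0 + X 1 + X 2)) : _ ∈ J)
      simpa using this
  rw [← Ideal.mk_ker (I := J)]
  exact (Ideal.map_eq_bot_iff_le_ker _).1 map_pow_eq_bot

theorem isLefschetzElem_sum_X_cubicIdeal (h3 : (3 : K) ≠ 0) :
    isLefschetzElem 3 K (cubicIdeal K) (X 0 + X 1 + X 2) := by
  have hL : (X 0 + X 1 + X 2 : MvPolynomial (Fin 3) K).IsHomogeneous 1 :=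
    ((isHomogeneous_X K 0).add (isHomogeneous_X K 1)).add (isHomogeneous_X K 2)
  have hL0 : (X 0 + X 1 + X 2 : MvPolynomial (Fin 3) K) ≠ 0 := fun h ↦ by
    simpa using congrArg (eval ![1, 0, 0]) h
  refine isLefschetzElem_of_mulMapSurj (isHomogeneous_cubicIdeal K)
    (cubicIdeal_le_pow_idealOfVars K) hL hL0 ?_
  rw [mulMapSurj_iff_pow_idealOfVars_le (isHomogeneous_cubicIdeal K) hL]
  exact pow_three_idealOfVars_le_cubicIdeal_sup h3

theorem not_hasWLP_cubicIdeal [CharP K 3] : ¬ hasWLP 3 K (cubicIdeal K) :=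
  not_hasWLP_of_X_pow_char_mem (p := 3) (cubicIdeal_le_pow_idealOfVars K)
    (X_pow_three_mem_cubicIdeal K) (hilb_cubicIdeal_two_le_three K)

end Cubics

end WeakLefschetz

/-- `K[x,y,z]/(x³, y³, z³, xy(x+z))` has the WLP iff `char K ≠ 3`. -/
theorem stmt_11 {K : Type*} [Field K] :
    hasWLP 3 K (Ideal.span {(X 0 : MvPolynomial (Fin 3) K) ^ 3, X 1 ^ 3, X 2 ^ 3,
      X 0 * X 1 * (X 0 + X 2)}) ↔ ringChar K ≠ 3 := by
  rw [← WeakLefschetz.cubicIdeal_eq_span, Ne, ringChar.eq_iff]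
  constructor
  · intro hWLP hchar
    exact WeakLefschetz.not_hasWLP_cubicIdeal hWLP
  · intro hchar
    have h3 : (3 : K) ≠ 0 := mod_cast mt (CharP.charP_iff_prime_eq_zero Nat.prime_three).2 hchar
    exact ⟨_, WeakLefschetz.isLefschetzElem_sum_X_cubicIdeal h3⟩
end
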